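/- (Main theorem) Let σ : S → A be a pre-strategy. The following are equivalent: (i) σ is a strategy, i.e. ccc_A ⊙ σ ≅ σ as pre-strategies on A; (ii) σ : (C(S), ⊇⁻) → (C(A), ⊇⁻) and σ : (C(S), ⊆⁺) → (C(A), ⊆⁺) are discrete fibrations; (iii) σ : (C(S), ⊑_S) → (C(A), ⊑_A) is a discrete fibration for the Scott orders; (iv) σ is courteous and receptive. -/

import Mathlib

/-- An event structure presented as raw data: a set of events, a causality
relation and a consistency predicate on (finite) sets of events. -/
structure ES where
  Evt : Type
  le : Evt → Evt → Prop
  Con : Set (Set Evt)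

namespace ES

/-- Strict causality. -/
def lt (E : ES) (a b : E.Evt) : Prop := E.le a b ∧ a ≠ b

/-- The axioms of event structures: `le` is a partial order, causes `[e]` are
finite, consistency is a nonempty collection of finite sets, closed under
subsets, containing all singletons, and closed under adding causal
dependencies. -/
def IsES (E : ES) : Prop :=
  (∀ e, E.le e e) ∧
  (∀ a b c, E.le a b → E.le b c → E.le a c) ∧
  (∀ a b, E.le a b → E.le b a → a = b) ∧
  (∀ e, {e' | E.le e' e}.Finite) ∧
  E.Con.Nonempty ∧
  (∀ X ∈ E.Con, X.Finite) ∧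
  (∀ e, ({e} : Set E.Evt) ∈ E.Con) ∧
  (∀ X ∈ E.Con, ∀ Y, Y ⊆ X → Y ∈ E.Con) ∧
  (∀ X ∈ E.Con, ∀ e ∈ X, ∀ e', E.le e' e → insert e' X ∈ E.Con)

/-- A (finite) configuration: a finite, consistent and down-closed set of events. -/
def Config (E : ES) (x : Set E.Evt) : Prop :=
  x.Finite ∧ (∀ Y, Y ⊆ x → Y.Finite → Y ∈ E.Con) ∧
  ∀ e ∈ x, ∀ e', E.le e' e → e' ∈ x

/-- Immediate causality `e ⇢ e'`. -/
def imc (E : ES) (a b : E.Evt) : Prop :=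
  E.lt a b ∧ ∀ c, E.le a c → E.le c b → c = a ∨ c = b

/-- Simple parallel composition of event structures. -/
def par (E F : ES) : ES where
  Evt := E.Evt ⊕ F.Evt
  le := fun p q =>
    match p, q with
    | Sum.inl a, Sum.inl b => E.le a b
    | Sum.inr a, Sum.inr b => F.le a b
    | _, _ => False
  Con := {X | Sum.inl ⁻¹' X ∈ E.Con ∧ Sum.inr ⁻¹' X ∈ F.Con}

/-- Projection (hiding): restrict an event structure to a subset `V` of events. -/
def proj (E : ES) (V : Set E.Evt) : ES where
  Evt := ↥V
  le := fun a b => E.le a.val b.val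
  Con := {X | Subtype.val '' X ∈ E.Con}

end ES

/-- A (total) map of event structures: preserves configurations and is
injective on each configuration. -/
def IsMap (E F : ES) (f : E.Evt → F.Evt) : Prop :=
  (∀ x, E.Config x → F.Config (f '' x)) ∧ ∀ x, E.Config x → Set.InjOn f x
/-- An event structure with polarities (`true` = positive/Player,
`false` = negative/Opponent). -/
structure ESP extends ES where
  pol : Evt → Bool

namespace ESP

/-- The dual game: polarities reversed. -/
def dual (A : ESP) : ESP where
  toES := A.toES
  pol := fun a => !A.pol a

/-- Simple parallel composition of games. -/
def par (A B : ESP) : ESP where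
  toES := A.toES.par B.toES
  pol := Sum.elim A.pol B.pol

end ESP

/-- A pre-strategy on the game `A`: a polarity-preserving map of event
structures `σ : S → A`. -/
def IsPreStrategy (S A : ESP) (σ : S.Evt → A.Evt) : Prop :=
  IsMap S.toES A.toES σ ∧ ∀ s, A.pol (σ s) = S.pol s

/-- `polExt pol b x y` means `x ⊆ y` and all events of `y \ x` have polarity `b`;
so `polExt pol true x y` is `x ⊆⁺ y` and `polExt pol false x y` is `x ⊆⁻ y`. -/
def polExt {α : Type} (pol : α → Bool) (b : Bool) (x y : Set α) : Prop :=
  x ⊆ y ∧ ∀ a ∈ y, a ∉ x → pol a = b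

/-- The Scott order: `x ⊑ y` iff `x ⊇⁻ (x ∩ y) ⊆⁺ y`. -/
def scottLE {α : Type} (pol : α → Bool) (x y : Set α) : Prop :=
  polExt pol false (x ∩ y) x ∧ polExt pol true (x ∩ y) y

/-- Courtesy: immediate causal links other than `− ⇢ +` are sent to immediate
causal links of the game. -/
def Courteous (S A : ESP) (σ : S.Evt → A.Evt) : Prop :=
  ∀ s s', S.toES.imc s s' → (S.pol s, S.pol s') ≠ (false, true) →
    A.toES.imc (σ s) (σ s')

/-- Receptivity: every negative extension of `σ x` in the game is matched by a
unique extension of `x`. -/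
def Receptive (S A : ESP) (σ : S.Evt → A.Evt) : Prop :=
  ∀ x, S.toES.Config x → ∀ a, A.pol a = false → a ∉ σ '' x →
    A.toES.Config (insert a (σ '' x)) →
    ∃! s, s ∉ x ∧ S.toES.Config (insert s x) ∧ σ s = a
/-- `σ` is a discrete fibration from `(C(S), rS)` to `(C(A), rA)`: it is
monotone and every `y` with `rA y (σ x)` lifts to a unique `x'` with
`rS x' x` and `σ x' = y`. -/
def DiscFibOn (S A : ES) (σ : S.Evt → A.Evt)
    (rS : Set S.Evt → Set S.Evt → Prop)
    (rA : Set A.Evt → Set A.Evt → Prop) : Prop :=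
  (∀ x x', S.Config x → S.Config x' → rS x x' → rA (σ '' x) (σ '' x')) ∧
  ∀ x, S.Config x → ∀ y, A.Config y → rA y (σ '' x) →
    ∃! x', S.Config x' ∧ rS x' x ∧ σ '' x' = y

/-- The order of the poset `(C, ⊇⁻)`: `x ≤ y` iff `x ⊇⁻ y`, i.e. `y ⊆⁻ x`. -/
def negLE {α : Type} (pol : α → Bool) (x y : Set α) : Prop :=
  polExt pol false y x

/-- The order of the poset `(C, ⊆⁺)`: `x ≤ y` iff `x ⊆⁺ y`. -/
def posLE {α : Type} (pol : α → Bool) (x y : Set α) : Prop :=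
  polExt pol true x y
/-- The generating relation of copycat causality on `A^⊥ ∥ A`:
the causality of `A^⊥ ∥ A` together with the links from each negative
occurrence to the corresponding positive occurrence on the other side. -/
def ccGen (A : ESP) : (A.Evt ⊕ A.Evt) → (A.Evt ⊕ A.Evt) → Prop :=
  fun p q => (A.dual.par A).le p q ∨
    (∃ a, A.pol a = true ∧ p = Sum.inl a ∧ q = Sum.inr a) ∨
    (∃ a, A.pol a = false ∧ p = Sum.inr a ∧ q = Sum.inl a)

/-- The copycat structure `CC_A` on the game `A`. -/
def CC (A : ESP) : ESP where
  Evt := A.Evt ⊕ A.Evt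
  le := Relation.ReflTransGen (ccGen A)
  Con := {X | {e | ∃ e' ∈ X, Relation.ReflTransGen (ccGen A) e e'} ∈ (A.dual.par A).Con}
  pol := (A.dual.par A).pol
/-- The relation `◁` generating the order on the graph `G` of a bijection:
`p ◁ q` when both are in `G` and `p.1 <_S q.1` or `p.2 <_T q.2`. -/
def gRel (S T : ES) (G : Set (S.Evt × T.Evt)) :
    (S.Evt × T.Evt) → (S.Evt × T.Evt) → Prop :=
  fun p q => p ∈ G ∧ q ∈ G ∧ (S.lt p.1 q.1 ∨ T.lt p.2 q.2)

/-- The graph `G` is secured: the reflexive-transitive closure of `◁` on `G`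
is antisymmetric (hence a partial order). -/
def SecuredOn (S T : ES) (G : Set (S.Evt × T.Evt)) : Prop :=
  ∀ p q, Relation.ReflTransGen (gRel S T G) p q →
    Relation.ReflTransGen (gRel S T G) q p → p = q

/-- `G` is (the graph of) a secured bijection `φ : x ≃ σ x = τ y ≃ y` between
configurations `x ∈ C(S)` and `y ∈ C(T)`, an element of `SB(σ, τ)`. -/
def IsSecBij (S T A : ES) (σ : S.Evt → A.Evt) (τ : T.Evt → A.Evt)
    (G : Set (S.Evt × T.Evt)) : Prop :=
  S.Config (Prod.fst '' G) ∧ T.Config (Prod.snd '' G) ∧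
  (∀ p ∈ G, σ p.1 = τ p.2) ∧
  (∀ s ∈ Prod.fst '' G, ∀ t ∈ Prod.snd '' G, σ s = τ t → (s, t) ∈ G) ∧
  σ '' (Prod.fst '' G) = τ '' (Prod.snd '' G) ∧
  SecuredOn S T G

/-- `G` has a top (greatest) element for the induced order. -/
def IsPrime (S T : ES) (G : Set (S.Evt × T.Evt)) : Prop :=
  ∃ p ∈ G, ∀ q ∈ G, Relation.ReflTransGen (gRel S T G) q p

/-- The interaction `S ∧ T` of `σ : S → A` and `τ : T → A`: events are the
prime secured bijections, causality is inclusion of graphs, and a finite set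
of events is consistent when the union of their graphs is a secured bijection. -/
def Interaction (S T A : ES) (σ : S.Evt → A.Evt) (τ : T.Evt → A.Evt) : ES where
  Evt := {G : Set (S.Evt × T.Evt) // IsSecBij S T A σ τ G ∧ IsPrime S T G}
  le := fun G G' => G.val ⊆ G'.val
  Con := {X | X.Finite ∧ IsSecBij S T A σ τ (⋃ G ∈ X, G.val)}
/-- The interaction `CC_A ⊛ S`: the pullback of `σ ∥ id_A : S ∥ A → A ∥ A`
and `ccc_A = id : CC_A → A ∥ A` (polarities ignored). -/
def ccInterES (A S : ESP) (σ : S.Evt → A.Evt) : ES :=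
  Interaction (S.toES.par A.toES) (CC A).toES (A.toES.par A.toES)
    (Sum.map σ id) id

/-- The graph of the bijection `x ∥ y ≃ σ x ∥ y` determined by a pair of
configurations `(x, y) ∈ C(S) × C(A)` (the secured bijection `Ψ⁻¹(x, y)`). -/
def ccGraph (A S : ESP) (σ : S.Evt → A.Evt) (xS : Set S.Evt) (xA : Set A.Evt) :
    Set ((S.Evt ⊕ A.Evt) × (A.Evt ⊕ A.Evt)) :=
  {p | p.1 ∈ Sum.inl '' xS ∪ Sum.inr '' xA ∧ p.2 = Sum.map σ id p.1}

/-- All maximal events of the graph `G` (for its induced order) are visible,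
i.e. project to the right-hand copy of `A`. -/
def MaxVis (A S : ESP) (σ : S.Evt → A.Evt)
    (G : Set ((S.Evt ⊕ A.Evt) × (A.Evt ⊕ A.Evt))) : Prop :=
  ∀ p ∈ G, (∀ q ∈ G, Relation.ReflTransGen
      (gRel (S.toES.par A.toES) (CC A).toES G) p q → q = p) →
    ∃ a : A.Evt, p.1 = Sum.inr a
/-- Visibility of an event of `CC_A ⊛ S`: its top synchronised pair projects
to the right-hand copy of `A`. -/
def ccVis (A S : ESP) (σ : S.Evt → A.Evt) (G : (ccInterES A S σ).Evt) : Prop :=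
  ∃ a : A.Evt,
    ((Sum.inr a, Sum.inr a) : (S.Evt ⊕ A.Evt) × (A.Evt ⊕ A.Evt)) ∈ G.val ∧
    ∀ q ∈ G.val, Relation.ReflTransGen
      (gRel (S.toES.par A.toES) (CC A).toES G.val) q (Sum.inr a, Sum.inr a)

/-- The composition `CC_A ⊙ S`: the projection of `CC_A ⊛ S` to its visible
events. -/
def ccCompES (A S : ESP) (σ : S.Evt → A.Evt) : ES :=
  (ccInterES A S σ).proj {G | ccVis A S σ G}

/-- The labelling map `ccc_A ⊙ σ : CC_A ⊙ S → A` of the composition. -/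
noncomputable def ccCompLabel (A S : ESP) (σ : S.Evt → A.Evt)
    (G : (ccCompES A S σ).Evt) : A.Evt :=
  Exists.choose (G.prop : ccVis A S σ G.val)

/-- The composition `CC_A ⊙ S` as an esp, with polarities inherited from the
right-hand copy of `A`. -/
noncomputable def ccCompESP (A S : ESP) (σ : S.Evt → A.Evt) : ESP where
  toES := ccCompES A S σ
  pol := fun G => A.pol (ccCompLabel A S σ G)

/-- The union of the graphs of the events of the minimal witness
`[z] ∈ C(CC_A ⊛ S)` of a configuration `z ∈ C(CC_A ⊙ S)`. -/
def ccWitUnion (A S : ESP) (σ : S.Evt → A.Evt)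
    (z : Set (ccCompES A S σ).Evt) :
    Set ((S.Evt ⊕ A.Evt) × (A.Evt ⊕ A.Evt)) :=
  ⋃ H ∈ {H : (ccInterES A S σ).Evt | ∃ G ∈ z, H.val ⊆ G.val.val}, H.val

/-- The `C(S)` component `y_S` of the representation via `Ψ` of the minimal
witness of `z ∈ C(CC_A ⊙ S)`. -/
def ccWitS (A S : ESP) (σ : S.Evt → A.Evt)
    (z : Set (ccCompES A S σ).Evt) : Set S.Evt :=
  Sum.inl ⁻¹' (Prod.fst '' ccWitUnion A S σ z)

/-- The `C(A)` component `y_A` of the representation via `Ψ` of the minimal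
witness of `z ∈ C(CC_A ⊙ S)`. -/
def ccWitA (A S : ESP) (σ : S.Evt → A.Evt)
    (z : Set (ccCompES A S σ).Evt) : Set A.Evt :=
  Sum.inr ⁻¹' (Prod.fst '' ccWitUnion A S σ z)

/-- An isomorphism between pre-strategies `σ : S → A` and `τ : T → A` on the
same game: an isomorphism of event structures commuting with the maps to the
game. -/
def PreStratIso (S T A : ESP) (σ : S.Evt → A.Evt) (τ : T.Evt → A.Evt) : Prop :=
  ∃ (f : S.Evt → T.Evt) (g : T.Evt → S.Evt),
    IsMap S.toES T.toES f ∧ IsMap T.toES S.toES g ∧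
    (∀ s, g (f s) = s) ∧ (∀ t, f (g t) = t) ∧ ∀ s, τ (f s) = σ s

/-- `σ` is a strategy: a pre-strategy with `ccc_A ⊙ σ ≅ σ`. -/
noncomputable def IsStrategy (S A : ESP) (σ : S.Evt → A.Evt) : Prop :=
  IsPreStrategy S A σ ∧
  PreStratIso (ccCompESP A S σ) S A (ccCompLabel A S σ) σ

/-!
The strategy condition is analysed through posets of configurations. As `σ` and `ccc_A ⊙ σ` are
injective on configurations, isomorphisms between them amount to order isomorphisms between their
configuration posets commuting with direct images.

A configuration of `CC_A ⊛ S` is a pair `(x, y)` of configurations of `S` and `A` with `y ⊑ σ x`,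
and a configuration of `CC_A ⊙ S` is such a pair in which `x` is minimal: every event of `x` lies
below a positive event already forwarded to `y`.

Given an isomorphism from `C(S)` to these minimal pairs, let `y ⊑ σ x` with `y` comparable to
`σ x`. The pair of `x` restricts to exactly one comparable minimal pair over `y`, so `σ` is a
discrete fibration for the orders `⊇⁻` and `⊆⁺`. The Scott order is the composite of these two, and
fibrations for the two factors compose. Conversely, courtesy and receptivity make `x` recoverable
from its minimal part together with `σ x`, since the remaining maximal events are negative, and the
Scott fibration shows that each minimal pair arises in this way.
-/

namespace ES

/-- The set `[e]` of causes of an event `e`. -/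
def causes (E : ES) (e : E.Evt) : Set E.Evt := {e' | E.le e' e}

/-- The poset `C(E)` of configurations, ordered by inclusion. -/
abbrev Configuration (E : ES) : Type := {x : Set E.Evt // E.Config x}

/-- Local injectivity: injectivity on every configuration. The codomain is a bare type, so that the
notion applies to labellings by the events of a game. -/
def LocallyInjective (E : ES) {α : Type*} (f : E.Evt → α) : Prop :=
  ∀ x, E.Config x → x.InjOn f

theorem locallyInjective_id (E : ES) : E.LocallyInjective id :=
  fun _ _ => Function.injective_id.injOn

namespace IsES

variable {E : ES}

theorem le_refl (hE : E.IsES) (a : E.Evt) : E.le a a := hE.1 a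

theorem le_trans (hE : E.IsES) {a b c : E.Evt} (hab : E.le a b) (hbc : E.le b c) : E.le a c :=
  hE.2.1 a b c hab hbc

theorem le_antisymm (hE : E.IsES) {a b : E.Evt} (hab : E.le a b) (hba : E.le b a) : a = b :=
  hE.2.2.1 a b hab hba

theorem finite_causes (hE : E.IsES) (e : E.Evt) : (E.causes e).Finite := hE.2.2.2.1 e

theorem mem_con_of_subset (hE : E.IsES) {X Y : Set E.Evt} (hX : X ∈ E.Con) (hYX : Y ⊆ X) :
    Y ∈ E.Con :=
  hE.2.2.2.2.2.2.2.1 X hX Y hYX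

theorem insert_mem_con (hE : E.IsES) {X : Set E.Evt} {e e' : E.Evt} (hX : X ∈ E.Con)
    (he : e ∈ X) (hle : E.le e' e) : insert e' X ∈ E.Con :=
  hE.2.2.2.2.2.2.2.2 X hX e he e' hle

/-- The causality of an event structure as a bundled order, giving access to the order theory of
the library. -/
abbrev partialOrder (hE : E.IsES) : PartialOrder E.Evt where
  le := E.le
  le_refl _ := hE.le_refl _
  le_trans _ _ _ := hE.le_trans
  le_antisymm _ _ := hE.le_antisymm

theorem reflTransGen_imc (hE : E.IsES) {a b : E.Evt} (hab : E.le a b) :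
    Relation.ReflTransGen E.imc a b := by
  let := hE.partialOrder
  let : LocallyFiniteOrder E.Evt :=
    LocallyFiniteOrder.ofFiniteIcc fun a b => (hE.finite_causes b).subset fun _ hc => hc.2
  have imc_of_covBy : ∀ a b : E.Evt, a ⋖ b → E.imc a b := fun _ _ hcov =>
    ⟨⟨hcov.le, hcov.ne⟩, fun _ hac hcb => hcov.eq_or_eq hac hcb⟩
  exact Relation.ReflTransGen.mono imc_of_covBy _ _ (le_iff_reflTransGen_covBy.1 hab)

theorem config_causes (hE : E.IsES) (e : E.Evt) : E.Config (E.causes e) := by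
  have insert_mem : ∀ Y : Set E.Evt, Y.Finite → Y ⊆ E.causes e → insert e Y ∈ E.Con := by
    intro Y hY
    induction Y, hY using Set.Finite.induction_on with
    | empty => intro _; simpa using hE.2.2.2.2.2.2.1 e
    | @insert a Y _ _ ih =>
      intro hsub
      rw [Set.insert_subset_iff] at hsub
      rw [Set.insert_comm]
      exact hE.insert_mem_con (ih hsub.2) (Set.mem_insert e Y) hsub.1
  exact ⟨hE.finite_causes e,
    fun Y hY hfin => hE.mem_con_of_subset (insert_mem Y hfin hY) (Set.subset_insert e Y),
    fun a ha b hba => hE.le_trans hba ha⟩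

end IsES

namespace Config

variable {E : ES} {x y : Set E.Evt}

theorem finite (hx : E.Config x) : x.Finite := hx.1

theorem mem_of_le (hx : E.Config x) {a b : E.Evt} (hb : b ∈ x) (hab : E.le a b) : a ∈ x :=
  hx.2.2 b hb a hab

theorem causes_subset (hx : E.Config x) {e : E.Evt} (he : e ∈ x) : E.causes e ⊆ x :=
  fun _ => hx.mem_of_le he

theorem of_subset (hx : E.Config x) (hyx : y ⊆ x)
    (hdown : ∀ b ∈ y, ∀ a, E.le a b → a ∈ y) : E.Config y :=
  ⟨hx.finite.subset hyx, fun Y hY => hx.2.1 Y (hY.trans hyx), hdown⟩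

theorem of_subset_of_imc (hE : E.IsES) (hx : E.Config x) (hyx : y ⊆ x)
    (hdown : ∀ b ∈ y, ∀ a, E.imc a b → a ∈ y) : E.Config y :=
  hx.of_subset hyx fun _ hb _ hab =>
    Relation.ReflTransGen.head_induction_on (hE.reflTransGen_imc hab) hb
      fun hac _ hc => hdown _ hc _ hac

theorem inter (hx : E.Config x) (hy : E.Config y) : E.Config (x ∩ y) :=
  hx.of_subset Set.inter_subset_left fun _ hb _ hab =>
    ⟨hx.mem_of_le hb.1 hab, hy.mem_of_le hb.2 hab⟩

theorem exists_config_insert (hE : E.IsES) (hx : E.Config x) (hy : E.Config y) (hxy : x ⊂ y) :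
    ∃ a ∈ y, a ∉ x ∧ E.Config (insert a x) := by
  let := hE.partialOrder
  obtain ⟨b, hby, hbx⟩ := Set.exists_of_ssubset hxy
  obtain ⟨a, ⟨hay, hax⟩, hmin⟩ :=
    (hy.finite.subset Set.sdiff_subset).exists_minimal (s := y \ x) ⟨b, hby, hbx⟩
  refine ⟨a, hay, hax, hy.of_subset (Set.insert_subset hay hxy.subset) ?_⟩
  rintro c (rfl | hcx) d hdc
  · by_cases hdx : d ∈ x
    · exact Or.inr hdx
    · exact Or.inl (hE.le_antisymm hdc (hmin ⟨hy.mem_of_le hay hdc, hdx⟩ hdc))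
  · exact Or.inr (hx.mem_of_le hcx hdc)

end Config

theorem IsES.config_causes_sdiff {E : ES} (hE : E.IsES) {a b : E.Evt} (hab : E.imc a b) :
    E.Config (E.causes b \ {a, b}) := by
  refine (hE.config_causes b).of_subset Set.sdiff_subset ?_
  rintro c ⟨hcb, hc⟩ d hdc
  refine ⟨hE.le_trans hdc hcb, ?_⟩
  rintro (rfl | rfl)
  exacts [hc (hab.2 c hdc hcb), hc (Or.inr (hE.le_antisymm hcb hdc))]

theorem par_config_iff {E F : ES} {X : Set (E.par F).Evt} :
    (E.par F).Config X ↔ E.Config (Sum.inl ⁻¹' X) ∧ F.Config (Sum.inr ⁻¹' X) := by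
  constructor
  · rintro ⟨hfin, hcon, hdown⟩
    refine ⟨⟨hfin.preimage Sum.inl_injective.injOn, fun Y hY hYfin => ?_,
        fun b hb a => hdown (Sum.inl b) hb (Sum.inl a)⟩,
      ⟨hfin.preimage Sum.inr_injective.injOn, fun Y hY hYfin => ?_,
        fun b hb a => hdown (Sum.inr b) hb (Sum.inr a)⟩⟩
    · rw [← Set.preimage_image_eq Y (Sum.inl_injective (β := F.Evt))]
      exact (hcon (Sum.inl '' Y) (Set.image_subset_iff.2 hY) (hYfin.image _)).1
    · rw [← Set.preimage_image_eq Y (Sum.inr_injective (α := E.Evt))]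
      exact (hcon (Sum.inr '' Y) (Set.image_subset_iff.2 hY) (hYfin.image _)).2
  · rintro ⟨⟨hfinE, hconE, hdownE⟩, hfinF, hconF, hdownF⟩
    refine ⟨Set.finite_preimage_inl_and_inr.1 ⟨hfinE, hfinF⟩, fun Y hY hYfin =>
      ⟨hconE _ (Set.preimage_mono hY) (hYfin.preimage Sum.inl_injective.injOn),
        hconF _ (Set.preimage_mono hY) (hYfin.preimage Sum.inr_injective.injOn)⟩, ?_⟩
    rintro (b | b) hb (a | a) hab
    · exact hdownE b hb a hab
    · exact hab.elim
    · exact hab.elim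
    · exact hdownF b hb a hab

end ES

namespace IsMap

variable {E F : ES} {f : E.Evt → F.Evt} {x : Set E.Evt}

theorem locallyInjective (hf : IsMap E F f) : E.LocallyInjective f := hf.2

theorem le_of_map_le (hE : E.IsES) (hf : IsMap E F f) (hx : E.Config x) {a b : E.Evt}
    (ha : a ∈ x) (hb : b ∈ x) (hle : F.le (f a) (f b)) : E.le a b := by
  obtain ⟨c, hcb, hca⟩ := (hf.1 _ (hE.config_causes b)).mem_of_le
    (Set.mem_image_of_mem f (hE.le_refl b)) hle
  exact hf.2 x hx (hx.mem_of_le hb hcb) ha hca ▸ hcb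

end IsMap

section PolarityOrders

variable {α β : Type} {p : α → Bool} {q : β → Bool} {f : α → β} {x y z : Set α}

theorem scottLE_iff :
    scottLE p x y ↔ (∀ a ∈ x, p a = true → a ∈ y) ∧ ∀ a ∈ y, p a = false → a ∈ x := by
  simp only [scottLE, polExt, Set.inter_subset_left, Set.inter_subset_right, true_and]
  grind

theorem scottLE.refl (p : α → Bool) (x : Set α) : scottLE p x x :=
  scottLE_iff.2 ⟨fun _ ha _ => ha, fun _ ha _ => ha⟩

theorem scottLE.trans (hxy : scottLE p x y) (hyz : scottLE p y z) : scottLE p x z := by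
  rw [scottLE_iff] at *
  exact ⟨fun a ha hpa => hyz.1 a (hxy.1 a ha hpa) hpa, fun a ha hpa => hxy.2 a (hyz.2 a ha hpa) hpa⟩

theorem negLE_iff : negLE p x y ↔ scottLE p x y ∧ y ⊆ x := by
  rw [scottLE_iff, negLE, polExt]
  grind

theorem posLE_iff : posLE p x y ↔ scottLE p x y ∧ x ⊆ y := by
  rw [scottLE_iff, posLE, polExt]
  grind

/-- The union of the orders `⊇⁻` and `⊆⁺`: the Scott order between comparable sets. -/
def comparableScottLE (p : α → Bool) (x y : Set α) : Prop :=
  scottLE p x y ∧ (x ⊆ y ∨ y ⊆ x)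

theorem negLE_iff_comparableScottLE : negLE p x y ↔ comparableScottLE p x y ∧ y ⊆ x := by
  rw [negLE_iff, comparableScottLE]
  tauto

theorem posLE_iff_comparableScottLE : posLE p x y ↔ comparableScottLE p x y ∧ x ⊆ y := by
  rw [posLE_iff, comparableScottLE]
  tauto

theorem scottLE.image (hf : ∀ a, q (f a) = p a) (hxy : scottLE p x y) :
    scottLE q (f '' x) (f '' y) := by
  rw [scottLE_iff] at *
  simp only [Set.forall_mem_image, hf]
  exact ⟨fun a ha hpa => Set.mem_image_of_mem f (hxy.1 a ha hpa),
    fun a ha hpa => Set.mem_image_of_mem f (hxy.2 a ha hpa)⟩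

theorem scottLE_of_image (hf : ∀ a, q (f a) = p a) (hinj : (x ∪ y).InjOn f)
    (hxy : scottLE q (f '' x) (f '' y)) : scottLE p x y := by
  simp only [scottLE_iff, Set.forall_mem_image, hf] at hxy
  exact scottLE_iff.2
    ⟨fun a ha hpa => (hinj.mem_image_iff Set.subset_union_right (Or.inl ha)).1 (hxy.1 ha hpa),
      fun a ha hpa => (hinj.mem_image_iff Set.subset_union_left (Or.inr ha)).1 (hxy.2 ha hpa)⟩

theorem scottLE.image_inter (hf : ∀ a, q (f a) = p a) (hxy : scottLE p x y) :
    f '' (x ∩ y) = f '' x ∩ f '' y := by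
  rw [scottLE_iff] at hxy
  refine (Set.image_inter_subset f x y).antisymm ?_
  rintro _ ⟨⟨a, ha, rfl⟩, a', ha', heq⟩
  cases hpa : p a with
  | true => exact ⟨a, ⟨ha, hxy.1 a ha hpa⟩, rfl⟩
  | false => exact ⟨a', ⟨hxy.2 a' ha' (by rw [← hf, heq, hf, hpa]), ha'⟩, heq⟩

theorem scottLE.image_subset_image_iff (hf : ∀ a, q (f a) = p a) (hinj : x.InjOn f)
    (hxy : scottLE p x y) : f '' x ⊆ f '' y ↔ x ⊆ y := by
  refine ⟨fun himg => ?_, Set.image_mono⟩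
  rw [← Set.inter_eq_left, ← hxy.image_inter hf,
    hinj.image_eq_image_iff Set.inter_subset_left subset_rfl] at himg
  exact Set.inter_eq_left.1 himg

theorem scottLE.image_superset_image_iff (hf : ∀ a, q (f a) = p a) (hinj : y.InjOn f)
    (hxy : scottLE p x y) : f '' y ⊆ f '' x ↔ y ⊆ x := by
  refine ⟨fun himg => ?_, Set.image_mono⟩
  rw [← Set.inter_eq_right, ← hxy.image_inter hf,
    hinj.image_eq_image_iff Set.inter_subset_right subset_rfl] at himg
  exact Set.inter_eq_right.1 himg

end PolarityOrders

namespace DiscFibOn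

theorem restrict {S A : ES} {σ : S.Evt → A.Evt} {rS rS' kS : Set S.Evt → Set S.Evt → Prop}
    {rA rA' kA : Set A.Evt → Set A.Evt → Prop} (hfib : DiscFibOn S A σ rS rA)
    (hrS : ∀ x x', rS' x x' ↔ rS x x' ∧ kS x x') (hrA : ∀ y y', rA' y y' ↔ rA y y' ∧ kA y y')
    (hk : ∀ x x', S.Config x → S.Config x' → rS x x' → (kA (σ '' x) (σ '' x') ↔ kS x x')) :
    DiscFibOn S A σ rS' rA' := by
  refine ⟨fun x x' hx hx' hxx' => ?_, fun x hx y hy hyx => ?_⟩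
  · rw [hrS] at hxx'
    exact (hrA _ _).2 ⟨hfib.1 x x' hx hx' hxx'.1, (hk x x' hx hx' hxx'.1).2 hxx'.2⟩
  · rw [hrA] at hyx
    obtain ⟨x', ⟨hx', hx'x, rfl⟩, hunique⟩ := hfib.2 x hx y hy hyx.1
    exact ⟨x', ⟨hx', (hrS _ _).2 ⟨hx'x, (hk x' x hx' hx hx'x).1 hyx.2⟩, rfl⟩,
      fun x'' ⟨hx'', hx''x, himg⟩ => hunique x'' ⟨hx'', ((hrS _ _).1 hx''x).1, himg⟩⟩

variable {S A : ESP} {σ : S.Evt → A.Evt}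

theorem comparable_of_scott (hσ : IsPreStrategy S A σ)
    (hfib : DiscFibOn S.toES A.toES σ (scottLE S.pol) (scottLE A.pol)) :
    DiscFibOn S.toES A.toES σ (comparableScottLE S.pol) (comparableScottLE A.pol) :=
  hfib.restrict (fun _ _ => Iff.rfl) (fun _ _ => Iff.rfl) fun _ _ hx hx' hxx' =>
    or_congr (hxx'.image_subset_image_iff hσ.2 (hσ.1.2 _ hx))
      (hxx'.image_superset_image_iff hσ.2 (hσ.1.2 _ hx'))

theorem neg_of_comparable (hσ : IsPreStrategy S A σ)
    (hfib : DiscFibOn S.toES A.toES σ (comparableScottLE S.pol) (comparableScottLE A.pol)) :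
    DiscFibOn S.toES A.toES σ (negLE S.pol) (negLE A.pol) :=
  hfib.restrict (fun _ _ => negLE_iff_comparableScottLE) (fun _ _ => negLE_iff_comparableScottLE)
    fun _ _ _ hx' hxx' => hxx'.1.image_superset_image_iff hσ.2 (hσ.1.2 _ hx')

theorem pos_of_comparable (hσ : IsPreStrategy S A σ)
    (hfib : DiscFibOn S.toES A.toES σ (comparableScottLE S.pol) (comparableScottLE A.pol)) :
    DiscFibOn S.toES A.toES σ (posLE S.pol) (posLE A.pol) :=
  hfib.restrict (fun _ _ => posLE_iff_comparableScottLE) (fun _ _ => posLE_iff_comparableScottLE)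
    fun _ _ hx _ hxx' => hxx'.1.image_subset_image_iff hσ.2 (hσ.1.2 _ hx)

theorem scott_of_neg_of_pos (hσ : IsPreStrategy S A σ)
    (hneg : DiscFibOn S.toES A.toES σ (negLE S.pol) (negLE A.pol))
    (hpos : DiscFibOn S.toES A.toES σ (posLE S.pol) (posLE A.pol)) :
    DiscFibOn S.toES A.toES σ (scottLE S.pol) (scottLE A.pol) := by
  refine ⟨fun _ _ _ _ hxx' => hxx'.image hσ.2, fun x hx y hy hyx => ?_⟩
  obtain ⟨x₁, ⟨hx₁, hx₁x, himg₁⟩, hunique₁⟩ :=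
    hpos.2 x hx (y ∩ σ '' x) (hy.inter (hσ.1.1 x hx)) hyx.2
  obtain ⟨x₂, ⟨hx₂, hx₂x₁, himg₂⟩, hunique₂⟩ := hneg.2 x₁ hx₁ y hy (himg₁ ▸ hyx.1)
  refine ⟨x₂, ⟨hx₂, (negLE_iff.1 hx₂x₁).1.trans (posLE_iff.1 hx₁x).1, himg₂⟩, ?_⟩
  rintro x' ⟨hx', hx'x, rfl⟩
  have hinter : x' ∩ x = x₁ := hunique₁ _ ⟨hx'.inter hx, hx'x.2, hx'x.image_inter hσ.2⟩
  exact hunique₂ x' ⟨hx', hinter ▸ hx'x.1, rfl⟩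

theorem scott_iff_neg_and_pos (hσ : IsPreStrategy S A σ) :
    DiscFibOn S.toES A.toES σ (scottLE S.pol) (scottLE A.pol) ↔
      DiscFibOn S.toES A.toES σ (negLE S.pol) (negLE A.pol) ∧
        DiscFibOn S.toES A.toES σ (posLE S.pol) (posLE A.pol) := by
  refine ⟨fun hfib => ?_, fun hfib => scott_of_neg_of_pos hσ hfib.1 hfib.2⟩
  have hcomp := hfib.comparable_of_scott hσ
  exact ⟨hcomp.neg_of_comparable hσ, hcomp.pos_of_comparable hσ⟩

end DiscFibOn

namespace IsPreStrategy

variable {S A : ESP} {σ : S.Evt → A.Evt}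

theorem negLE_image (hσ : IsPreStrategy S A σ) {x x' : Set S.Evt} (hxx' : negLE S.pol x x') :
    negLE A.pol (σ '' x) (σ '' x') :=
  negLE_iff.2 ⟨(negLE_iff.1 hxx').1.image hσ.2, Set.image_mono hxx'.1⟩

theorem posLE_image (hσ : IsPreStrategy S A σ) {x x' : Set S.Evt} (hxx' : posLE S.pol x x') :
    posLE A.pol (σ '' x) (σ '' x') :=
  posLE_iff.2 ⟨(posLE_iff.1 hxx').1.image hσ.2, Set.image_mono hxx'.1⟩

theorem pos_fibration_of_courteous (hσ : IsPreStrategy S A σ) (hS : S.toES.IsES)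
    (hcourt : Courteous S A σ) : DiscFibOn S.toES A.toES σ (posLE S.pol) (posLE A.pol) := by
  refine ⟨fun _ _ _ _ => hσ.posLE_image, fun x hx y hy hyx => ?_⟩
  have himg : σ '' {s ∈ x | σ s ∈ y} = y := by
    refine (Set.image_subset_iff.2 fun _ hs => hs.2).antisymm fun a ha => ?_
    obtain ⟨s, hs, rfl⟩ := hyx.1 ha
    exact ⟨s, ⟨hs, ha⟩, rfl⟩
  have pos_of_notMem : ∀ s ∈ x, σ s ∉ y → S.pol s = true := fun s hs hsy =>
    (hσ.2 s).symm.trans (hyx.2 _ (Set.mem_image_of_mem σ hs) hsy)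
  have hconfig : S.toES.Config {s ∈ x | σ s ∈ y} := by
    refine hx.of_subset_of_imc hS (Set.sep_subset _ _) fun t ht s hst => ?_
    have hsx : s ∈ x := hx.mem_of_le ht.1 hst.1.1
    refine ⟨hsx, by_contra fun hsy => hsy ?_⟩
    have hpol : (S.pol s, S.pol t) ≠ (false, true) := by simp [pos_of_notMem s hsx hsy]
    exact hy.mem_of_le ht.2 (hcourt s t hst hpol).1.1
  refine ⟨_, ⟨hconfig, ⟨Set.sep_subset _ _, fun s hs hs' => ?_⟩, himg⟩, ?_⟩
  · exact pos_of_notMem s hs fun hsy => hs' ⟨hs, hsy⟩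
  · rintro x' ⟨-, hx'x, hx'y⟩
    exact ((hσ.1.2 x hx).image_eq_image_iff hx'x.1 (Set.sep_subset _ _)).1 (hx'y.trans himg.symm)

/-- Negative extensions are rigid: a minimal event `s` of `x'` outside `x''` would be negative, and
its partner `t` in `x''` with `σ t = σ s` would be enabled at `x' ∩ x''` by courtesy, so that
receptivity forces `s = t`. -/
theorem subset_of_negative_extension (hσ : IsPreStrategy S A σ) (hS : S.toES.IsES)
    (hcourt : Courteous S A σ) (hrec : Receptive S A σ) {x x' x'' : Set S.Evt}
    (hx' : S.toES.Config x') (hx'' : S.toES.Config x'') (hneg : polExt S.pol false x x')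
    (hsub : x ⊆ x'') (himg : σ '' x' ⊆ σ '' x'') : x' ⊆ x'' := by
  by_contra hnot
  have hinter : S.toES.Config (x' ∩ x'') := hx'.inter hx''
  obtain ⟨s, hsx', hs, hinsert_s⟩ := hinter.exists_config_insert hS hx'
    (Set.inter_subset_left.ssubset_of_ne fun heq => hnot (Set.inter_eq_left.1 heq))
  have hsx'' : s ∉ x'' := fun h => hs ⟨hsx', h⟩
  have below_s : ∀ a, S.le a s → a ≠ s → a ∈ x' ∩ x'' := fun a has hne =>
    (hinsert_s.mem_of_le (Set.mem_insert s _) has).resolve_left hne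
  have hspol : S.pol s = false := hneg.2 s hsx' fun hsx => hsx'' (hsub hsx)
  obtain ⟨t, htx'', hts⟩ := himg (Set.mem_image_of_mem σ hsx')
  have htpol : S.pol t = false := by rw [← hσ.2, hts, hσ.2, hspol]
  have hinsert_t : S.toES.Config (insert t (x' ∩ x'')) := by
    refine hx''.of_subset_of_imc hS (Set.insert_subset htx'' Set.inter_subset_right) ?_
    rintro b (rfl | hb) a hab
    · have hlt := (hcourt a b hab (by simp [htpol])).1
      rw [hts] at hlt
      obtain ⟨c, hcs, hca⟩ := (hσ.1.1 _ (hS.config_causes s)).mem_of_le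
        (Set.mem_image_of_mem σ (hS.le_refl s)) hlt.1
      have hc : c ∈ x' ∩ x'' := below_s c hcs fun hcs => hlt.2 (hca ▸ hcs ▸ rfl)
      exact Or.inr (hσ.1.2 x'' hx'' hc.2 (hx''.mem_of_le htx'' hab.1.1) hca ▸ hc)
    · exact Or.inr (hinter.mem_of_le hb hab.1.1)
  have hσs : σ s ∉ σ '' (x' ∩ x'') := fun h =>
    hsx'' ((hσ.1.2 x' hx').mem_image_iff Set.inter_subset_left hsx' |>.1 h).2
  have ht : t ∉ x' ∩ x'' := fun h => hσs (hts ▸ Set.mem_image_of_mem σ h)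
  refine hsx'' ((hrec _ hinter (σ s) ((hσ.2 s).trans hspol) hσs ?_).unique
    ⟨hs, hinsert_s, rfl⟩ ⟨ht, hinsert_t, hts⟩ ▸ htx'')
  exact Set.image_insert_eq (f := σ) ▸ hσ.1.1 _ hinsert_s

theorem exists_negative_lift (hσ : IsPreStrategy S A σ) (hA : A.toES.IsES)
    (hrec : Receptive S A σ) {x : Set S.Evt} {y : Set A.Evt} (hx : S.toES.Config x)
    (hy : A.toES.Config y) (hyx : negLE A.pol y (σ '' x)) :
    ∃ x', S.toES.Config x' ∧ negLE S.pol x' x ∧ σ '' x' = y := by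
  let images : Set (Set A.Evt) :=
    {z | z ⊆ y ∧ ∃ x', S.toES.Config x' ∧ negLE S.pol x' x ∧ σ '' x' = z}
  have himages : images.Finite := hy.finite.finite_subsets.subset fun _ hz => hz.1
  obtain ⟨z, ⟨hzy, x', hx', hx'x, rfl⟩, hmax⟩ := himages.exists_maximal
    ⟨σ '' x, hyx.1, x, hx, negLE_iff.2 ⟨scottLE.refl _ _, subset_rfl⟩, rfl⟩
  refine ⟨x', hx', hx'x, by_contra fun hne => ?_⟩
  obtain ⟨a, hay, hax', hinsert⟩ :=
    (hσ.1.1 x' hx').exists_config_insert hA hy (hzy.ssubset_of_ne hne)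
  have hapol : A.pol a = false := hyx.2 a hay fun hax => hax' (Set.image_mono hx'x.1 hax)
  obtain ⟨s, ⟨-, hsx', rfl⟩, -⟩ := hrec x' hx' a hapol hax' hinsert
  have hlift : negLE S.pol (insert s x') x := by
    refine ⟨hx'x.1.trans (Set.subset_insert s x'), ?_⟩
    rintro b (rfl | hb) hbx
    exacts [(hσ.2 b).symm.trans hapol, hx'x.2 b hb hbx]
  have hmem : σ '' insert s x' ∈ images :=
    ⟨Set.image_insert_eq (f := σ) ▸ Set.insert_subset hay hzy, _, hsx', hlift, rfl⟩
  exact hax' (hmax hmem (Set.image_mono (Set.subset_insert s x'))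
    (Set.mem_image_of_mem σ (Set.mem_insert s x')))

theorem neg_fibration_of_courteous_of_receptive (hσ : IsPreStrategy S A σ) (hA : A.toES.IsES)
    (hS : S.toES.IsES) (hcourt : Courteous S A σ) (hrec : Receptive S A σ) :
    DiscFibOn S.toES A.toES σ (negLE S.pol) (negLE A.pol) := by
  refine ⟨fun _ _ _ _ => hσ.negLE_image, fun x hx y hy hyx => ?_⟩
  obtain ⟨x', hx', hx'x, rfl⟩ := hσ.exists_negative_lift hA hrec hx hy hyx
  refine ⟨x', ⟨hx', hx'x, rfl⟩, ?_⟩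
  rintro x'' ⟨hx'', hx''x, himg⟩
  exact (hσ.subset_of_negative_extension hS hcourt hrec hx'' hx' hx''x hx'x.1 himg.subset).antisymm
    (hσ.subset_of_negative_extension hS hcourt hrec hx' hx'' hx'x hx''x.1 himg.superset)

theorem receptive_of_neg_fibration (hσ : IsPreStrategy S A σ)
    (hneg : DiscFibOn S.toES A.toES σ (negLE S.pol) (negLE A.pol)) : Receptive S A σ := by
  intro x hx a hapol hax hinsert
  have negLE_insert : ∀ s, A.pol (σ s) = false → negLE S.pol (insert s x) x := fun s hs => by
    refine ⟨Set.subset_insert s x, ?_⟩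
    rintro b (rfl | hb) hbx
    exacts [(hσ.2 b).symm.trans hs, (hbx hb).elim]
  have hle : negLE A.pol (insert a (σ '' x)) (σ '' x) := by
    refine ⟨Set.subset_insert _ _, ?_⟩
    rintro b (rfl | hb) hbx
    exacts [hapol, (hbx hb).elim]
  obtain ⟨x', ⟨hx', hx'x, himg⟩, hunique⟩ := hneg.2 x hx _ hinsert hle
  obtain ⟨s, hs, rfl⟩ : a ∈ σ '' x' := himg ▸ Set.mem_insert a _
  have hsx : s ∉ x := fun hsx => hax (Set.mem_image_of_mem σ hsx)
  have hx'_eq : x' = insert s x :=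
    ((hσ.1.2 x' hx').image_eq_image_iff subset_rfl (Set.insert_subset hs hx'x.1)).1
      (himg.trans Set.image_insert_eq.symm)
  refine ⟨s, ⟨hsx, hx'_eq ▸ hx', rfl⟩, ?_⟩
  rintro t ⟨htx, ht, hts⟩
  have heq : insert t x = x' := hunique _ ⟨ht, negLE_insert t (hts ▸ hapol), by
    rw [Set.image_insert_eq, hts]⟩
  exact ((hx'_eq ▸ heq ▸ Set.mem_insert t x : t ∈ insert s x)).resolve_right htx

end IsPreStrategy

theorem IsMap.imc_map_of_le {E F : ES} {f : E.Evt → F.Evt} (hE : E.IsES) (hf : IsMap E F f)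
    {a b : E.Evt} (hab : E.imc a b) (hle : F.le (f a) (f b)) : F.imc (f a) (f b) := by
  have hb := hE.config_causes b
  refine ⟨⟨hle, fun heq => hab.1.2 (hf.2 _ hb hab.1.1 (hE.le_refl b) heq)⟩, fun c hac hcb => ?_⟩
  obtain ⟨d, hdb, rfl⟩ := (hf.1 _ hb).mem_of_le (Set.mem_image_of_mem f (hE.le_refl b)) hcb
  exact (hab.2 d (hf.le_of_map_le hE hb hab.1.1 hdb hac) hdb).imp (congrArg f) (congrArg f)

/-- Without a link `f a ≤ f b`, the event `f a` can be removed from `f [b]`, although `a` cannot be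
removed from `[b]`. -/
theorem IsMap.config_image_causes_sdiff {E F : ES} {f : E.Evt → F.Evt} (hE : E.IsES)
    (hf : IsMap E F f) {a b : E.Evt} (hab : E.imc a b) (hle : ¬ F.le (f a) (f b)) :
    F.Config (f '' E.causes b \ {f a}) := by
  have hb := hE.config_causes b
  refine (hf.1 _ hb).of_subset Set.sdiff_subset ?_
  rintro _ ⟨⟨d, hdb, rfl⟩, hda⟩ c hcd
  refine ⟨(hf.1 _ hb).mem_of_le (Set.mem_image_of_mem f hdb) hcd, ?_⟩
  rintro rfl
  rcases hab.2 d (hf.le_of_map_le hE hb hab.1.1 hdb hcd) hdb with rfl | rfl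
  exacts [hda rfl, hle hcd]

theorem DiscFibOn.exists_subset_image_eq {S A : ESP} {σ : S.Evt → A.Evt}
    (hneg : DiscFibOn S.toES A.toES σ (negLE S.pol) (negLE A.pol)) {z x : Set S.Evt}
    {y : Set A.Evt} (hz : S.toES.Config z) (hx : S.toES.Config x) (hy : A.toES.Config y)
    (hxA : A.toES.Config (σ '' x)) (hzx : negLE S.pol x z) (hzy : σ '' z ⊆ y) (hyx : y ⊆ σ '' x) :
    ∃ x' ⊆ x, S.toES.Config x' ∧ σ '' x' = y := by
  have himg := hneg.1 x z hx hz hzx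
  obtain ⟨x', ⟨hx', hx'z, rfl⟩, -⟩ :=
    hneg.2 z hz y hy ⟨hzy, fun a ha => himg.2 a (hyx ha)⟩
  obtain ⟨x'', ⟨hx'', hx''x', himg''⟩, -⟩ :=
    hneg.2 x' hx' (σ '' x) hxA ⟨hyx, fun a ha hax' => himg.2 a ha fun haz => hax' (hzy haz)⟩
  have hx''z : negLE S.pol x'' z :=
    negLE_iff.2 ⟨(negLE_iff.1 hx''x').1.trans (negLE_iff.1 hx'z).1, hx'z.1.trans hx''x'.1⟩
  have hx''_eq : x'' = x :=
    (hneg.2 z hz (σ '' x) hxA himg).unique ⟨hx'', hx''z, himg''⟩ ⟨hx, hzx, rfl⟩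
  exact ⟨x', hx''_eq ▸ hx''x'.1, hx', rfl⟩

theorem IsPreStrategy.courteous_of_fibrations {S A : ESP} {σ : S.Evt → A.Evt}
    (hσ : IsPreStrategy S A σ) (hS : S.toES.IsES)
    (hneg : DiscFibOn S.toES A.toES σ (negLE S.pol) (negLE A.pol))
    (hpos : DiscFibOn S.toES A.toES σ (posLE S.pol) (posLE A.pol)) : Courteous S A σ := by
  intro s s' hss' hpol
  have hs' := hS.config_causes s'
  refine hσ.1.imc_map_of_le hS hss' (by_contra fun hle => ?_)
  have hy := hσ.1.config_image_causes_sdiff hS hss' hle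
  have no_lift : ∀ x ⊆ S.toES.causes s', S.toES.Config x →
      σ '' x ≠ σ '' S.toES.causes s' \ {σ s} := fun x hxs' hx himg => by
    have hmem : σ s' ∈ σ '' x := himg ▸ ⟨Set.mem_image_of_mem σ (hS.le_refl s'),
      fun heq => hss'.1.2 (hσ.1.2 _ hs' hss'.1.1 (hS.le_refl s') heq.symm)⟩
    have hs'x := ((hσ.1.2 _ hs').mem_image_iff hxs' (hS.le_refl s')).1 hmem
    exact (himg ▸ Set.mem_image_of_mem σ (hx.mem_of_le hs'x hss'.1.1) :
      σ s ∈ σ '' S.toES.causes s' \ {σ s}).2 rfl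
  cases hpols : S.pol s with
  | true =>
    obtain ⟨x, ⟨hx, hxs', himg⟩, -⟩ := hpos.2 _ hs' _ hy ⟨Set.sdiff_subset, by
      rintro a ha hay
      obtain rfl : a = σ s := by_contra fun hne => hay ⟨ha, hne⟩
      exact (hσ.2 s).trans hpols⟩
    exact no_lift x hxs'.1 hx himg
  | false =>
    have hpols' : S.pol s' = false := by simpa [hpols] using hpol
    have hneg_ext : negLE S.pol (S.toES.causes s') (S.toES.causes s' \ {s, s'}) := by
      refine ⟨Set.sdiff_subset, fun b hb hbz => ?_⟩
      rcases not_not.1 fun h => hbz ⟨hb, h⟩ with rfl | rfl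
      exacts [hpols, hpols']
    obtain ⟨x, hxs', hx, himg⟩ := hneg.exists_subset_image_eq (hS.config_causes_sdiff hss') hs' hy
      (hσ.1.1 _ hs') hneg_ext (by
        rintro _ ⟨b, ⟨hbs', hb⟩, rfl⟩
        exact ⟨Set.mem_image_of_mem σ hbs', fun heq =>
          hb (Or.inl (hσ.1.2 _ hs' hbs' hss'.1.1 heq))⟩)
      Set.sdiff_subset
    exact no_lift x hxs' hx himg

theorem IsPreStrategy.neg_and_pos_iff_courteous_and_receptive {S A : ESP} {σ : S.Evt → A.Evt}
    (hσ : IsPreStrategy S A σ) (hA : A.toES.IsES) (hS : S.toES.IsES) :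
    (DiscFibOn S.toES A.toES σ (negLE S.pol) (negLE A.pol) ∧
        DiscFibOn S.toES A.toES σ (posLE S.pol) (posLE A.pol)) ↔
      Courteous S A σ ∧ Receptive S A σ :=
  ⟨fun hfib => ⟨hσ.courteous_of_fibrations hS hfib.1 hfib.2,
      hσ.receptive_of_neg_fibration hfib.1⟩,
    fun h => ⟨hσ.neg_fibration_of_courteous_of_receptive hA hS h.1 h.2,
      hσ.pos_fibration_of_courteous hS h.1⟩⟩

section Interaction

variable {S T A : ES} {σ : S.Evt → A.Evt} {τ : T.Evt → A.Evt} {G H : Set (S.Evt × T.Evt)}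
  {p q : S.Evt × T.Evt}

/-- The order induced on the graph `G` of a bijection, of which securedness is the antisymmetry. -/
abbrev inducedLE (S T : ES) (G : Set (S.Evt × T.Evt)) : S.Evt × T.Evt → S.Evt × T.Evt → Prop :=
  Relation.ReflTransGen (gRel S T G)

/-- `H` is a part of the graph `G` that is down-closed for the induced order. -/
def IsLowerPart (S T : ES) (G H : Set (S.Evt × T.Evt)) : Prop :=
  H ⊆ G ∧ ∀ p q, gRel S T G p q → q ∈ H → p ∈ H

theorem inducedLE_mono (hHG : H ⊆ G) (hpq : inducedLE S T H p q) : inducedLE S T G p q :=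
  Relation.ReflTransGen.mono (fun _ _ hab => ⟨hHG hab.1, hHG hab.2.1, hab.2.2⟩) _ _ hpq

namespace IsLowerPart

theorem mem_and_inducedLE (hH : IsLowerPart S T G H) (hpq : inducedLE S T G p q) (hq : q ∈ H) :
    p ∈ H ∧ inducedLE S T H p q := by
  induction hpq using Relation.ReflTransGen.head_induction_on with
  | refl => exact ⟨hq, .refl⟩
  | head hab _ ih =>
    have ha := hH.2 _ _ hab ih.1
    exact ⟨ha, ih.2.head ⟨ha, ih.1, hab.2.2⟩⟩

theorem iUnion {ι : Type*} {H : ι → Set (S.Evt × T.Evt)} (hH : ∀ i, IsLowerPart S T G (H i)) :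
    IsLowerPart S T G (⋃ i, H i) := by
  refine ⟨Set.iUnion_subset fun i => (hH i).1, fun p q hpq hq => ?_⟩
  obtain ⟨i, hi⟩ := Set.mem_iUnion.1 hq
  exact Set.mem_iUnion.2 ⟨i, (hH i).2 p q hpq hi⟩

end IsLowerPart

namespace IsSecBij

theorem finite (hG : IsSecBij S T A σ τ G) : G.Finite :=
  (hG.1.finite.prod hG.2.1.finite).subset fun _ hp =>
    ⟨Set.mem_image_of_mem _ hp, Set.mem_image_of_mem _ hp⟩

theorem eq_of_fst_eq (hτ : T.LocallyInjective τ) (hG : IsSecBij S T A σ τ G) (hp : p ∈ G)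
    (hq : q ∈ G) (hpq : p.1 = q.1) : p = q := by
  refine Prod.ext hpq (hτ _ hG.2.1 (Set.mem_image_of_mem _ hp) (Set.mem_image_of_mem _ hq) ?_)
  rw [← hG.2.2.1 p hp, ← hG.2.2.1 q hq, hpq]

theorem eq_of_snd_eq (hσ : S.LocallyInjective σ) (hG : IsSecBij S T A σ τ G) (hp : p ∈ G)
    (hq : q ∈ G) (hpq : p.2 = q.2) : p = q := by
  refine Prod.ext (hσ _ hG.1 (Set.mem_image_of_mem _ hp) (Set.mem_image_of_mem _ hq) ?_) hpq
  rw [hG.2.2.1 p hp, hG.2.2.1 q hq, hpq]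

theorem of_isLowerPart (hτ : T.LocallyInjective τ) (hG : IsSecBij S T A σ τ G)
    (hH : IsLowerPart S T G H) : IsSecBij S T A σ τ H := by
  have hmap : ∀ p ∈ H, σ p.1 = τ p.2 := fun p hp => hG.2.2.1 p (hH.1 hp)
  refine ⟨hG.1.of_subset (Set.image_mono hH.1) ?_, hG.2.1.of_subset (Set.image_mono hH.1) ?_,
    hmap, ?_, ?_, fun p q hpq hqp => hG.2.2.2.2.2 p q (inducedLE_mono hH.1 hpq)
      (inducedLE_mono hH.1 hqp)⟩
  · rintro _ ⟨q, hq, rfl⟩ a haq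
    obtain ⟨p, hp, rfl⟩ := hG.1.mem_of_le (Set.mem_image_of_mem _ (hH.1 hq)) haq
    by_cases heq : p.1 = q.1
    · exact heq ▸ Set.mem_image_of_mem _ hq
    · exact Set.mem_image_of_mem _ (hH.2 p q ⟨hp, hH.1 hq, Or.inl ⟨haq, heq⟩⟩ hq)
  · rintro _ ⟨q, hq, rfl⟩ b hbq
    obtain ⟨p, hp, rfl⟩ := hG.2.1.mem_of_le (Set.mem_image_of_mem _ (hH.1 hq)) hbq
    by_cases heq : p.2 = q.2
    · exact heq ▸ Set.mem_image_of_mem _ hq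
    · exact Set.mem_image_of_mem _ (hH.2 p q ⟨hp, hH.1 hq, Or.inr ⟨hbq, heq⟩⟩ hq)
  · rintro _ ⟨p, hp, rfl⟩ _ ⟨q, hq, rfl⟩ heq
    have hmem := hG.2.2.2.1 _ (Set.mem_image_of_mem _ (hH.1 hp)) _
      (Set.mem_image_of_mem _ (hH.1 hq)) heq
    exact hG.eq_of_fst_eq hτ hmem (hH.1 hp) rfl ▸ hp
  · rw [Set.image_image, Set.image_image]
    exact Set.image_congr hmap

theorem isLowerPart_of_subset (hσ : S.LocallyInjective σ) (hτ : T.LocallyInjective τ)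
    (hG : IsSecBij S T A σ τ G) (hH : IsSecBij S T A σ τ H) (hHG : H ⊆ G) :
    IsLowerPart S T G H := by
  refine ⟨hHG, ?_⟩
  rintro p q ⟨hp, -, hlt | hlt⟩ hq
  · obtain ⟨r, hr, hrp⟩ := hH.1.mem_of_le (Set.mem_image_of_mem _ hq) hlt.1
    exact hG.eq_of_fst_eq hτ (hHG hr) hp hrp ▸ hr
  · obtain ⟨r, hr, hrp⟩ := hH.2.1.mem_of_le (Set.mem_image_of_mem _ hq) hlt.1
    exact hG.eq_of_snd_eq hσ (hHG hr) hp hrp ▸ hr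

end IsSecBij

theorem exists_subset_of_isPrime_of_subset_iUnion {ι : Type*} {H : ι → Set (S.Evt × T.Evt)}
    (hG : IsPrime S T G) (hGH : G ⊆ ⋃ i, H i)
    (hH : ∀ i, IsLowerPart S T (⋃ i, H i) (H i)) : ∃ i, G ⊆ H i := by
  obtain ⟨top, htop, hle⟩ := hG
  obtain ⟨i, hi⟩ := Set.mem_iUnion.1 (hGH htop)
  exact ⟨i, fun q hq => ((hH i).mem_and_inducedLE (inducedLE_mono hGH (hle q hq)) hi).1⟩

/-- The part of the graph `G` below `p` for the induced order. -/
def downPart (S T : ES) (G : Set (S.Evt × T.Evt)) (p : S.Evt × T.Evt) : Set (S.Evt × T.Evt) :=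
  {q ∈ G | inducedLE S T G q p}

theorem isLowerPart_downPart : IsLowerPart S T G (downPart S T G p) :=
  ⟨Set.sep_subset _ _, fun _ _ hqr hr => ⟨hqr.1, hr.2.head hqr⟩⟩

theorem inducedLE_downPart (hp : p ∈ G) (hq : q ∈ downPart S T G p) :
    inducedLE S T (downPart S T G p) q p :=
  (isLowerPart_downPart.mem_and_inducedLE hq.2 ⟨hp, .refl⟩).2

theorem IsLowerPart.eq_downPart (hH : IsLowerPart S T G H) (hp : p ∈ H)
    (htop : ∀ q ∈ H, inducedLE S T H q p) : H = downPart S T G p :=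
  Set.Subset.antisymm (fun q hq => ⟨hH.1 hq, inducedLE_mono hH.1 (htop q hq)⟩)
    fun _ hq => (hH.mem_and_inducedLE hq.2 hp).1

namespace Interaction

/-- The event of the interaction given by the secured bijection `G` below its element `p`. -/
def primeBelow (hτ : T.LocallyInjective τ) (hG : IsSecBij S T A σ τ G) (hp : p ∈ G) :
    (Interaction S T A σ τ).Evt :=
  ⟨downPart S T G p, hG.of_isLowerPart hτ isLowerPart_downPart,
    p, ⟨hp, .refl⟩, fun _ => inducedLE_downPart hp⟩

variable (V : Set (Interaction S T A σ τ).Evt)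

/-- `G` is a union of events of the interaction that lie in `V`. -/
def CoveredBy (G : Set (S.Evt × T.Evt)) : Prop :=
  ∀ p ∈ G, ∃ t ∈ V, t.val ⊆ G ∧ p ∈ t.val

/-- The events in `V` that are contained in `G`. -/
def eventsWithin (G : Set (S.Evt × T.Evt)) : Set ((Interaction S T A σ τ).proj V).Evt :=
  {t | t.val.val ⊆ G}

variable {V}

/-- The bijection represented by a set of events of the interaction. -/
def unionGraph (z : Set ((Interaction S T A σ τ).proj V).Evt) : Set (S.Evt × T.Evt) :=
  ⋃ t : z, t.val.val.val

theorem mem_con_iff_isSecBij_unionGraph {z : Set ((Interaction S T A σ τ).proj V).Evt}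
    (hz : z.Finite) :
    z ∈ ((Interaction S T A σ τ).proj V).Con ↔ IsSecBij S T A σ τ (unionGraph z) := by
  have hunion : ⋃ t ∈ Subtype.val '' (z : Set V), t.val = unionGraph z :=
    Set.biUnion_image.trans (Set.biUnion_eq_iUnion _ _)
  rw [← hunion]
  exact and_iff_right (hz.image _)

theorem isSecBij_unionGraph {z : Set ((Interaction S T A σ τ).proj V).Evt}
    (hz : ((Interaction S T A σ τ).proj V).Config z) : IsSecBij S T A σ τ (unionGraph z) :=
  (mem_con_iff_isSecBij_unionGraph hz.finite).1 (hz.2.1 z subset_rfl hz.finite)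

theorem isLowerPart_unionGraph (hσ : S.LocallyInjective σ) (hτ : T.LocallyInjective τ)
    (hG : IsSecBij S T A σ τ G) {z : Set ((Interaction S T A σ τ).proj V).Evt}
    (hz : z ⊆ eventsWithin V G) : IsLowerPart S T G (unionGraph z) :=
  IsLowerPart.iUnion fun t => hG.isLowerPart_of_subset hσ hτ t.val.val.prop.1 (hz t.prop)

theorem config_eventsWithin (hσ : S.LocallyInjective σ) (hτ : T.LocallyInjective τ)
    (hG : IsSecBij S T A σ τ G) :
    ((Interaction S T A σ τ).proj V).Config (eventsWithin V G) := by
  refine ⟨?_, fun Y hY hYfin => ?_, fun _ ht _ hle => Set.Subset.trans hle ht⟩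
  · refine Set.Finite.of_finite_image (f := fun t => t.val.val)
      (hG.finite.finite_subsets.subset ?_) fun _ _ _ _ h => Subtype.ext (Subtype.ext h)
    rintro _ ⟨t, ht, rfl⟩
    exact ht
  · exact (mem_con_iff_isSecBij_unionGraph hYfin).2 <|
      hG.of_isLowerPart hτ (isLowerPart_unionGraph hσ hτ hG hY)

theorem unionGraph_eventsWithin (hG : CoveredBy V G) : unionGraph (eventsWithin V G) = G := by
  refine (Set.iUnion_subset fun t => t.prop).antisymm fun p hp => ?_
  obtain ⟨t, htV, htG, hpt⟩ := hG p hp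
  exact Set.mem_iUnion.2 ⟨⟨⟨t, htV⟩, htG⟩, hpt⟩

theorem eventsWithin_unionGraph (hσ : S.LocallyInjective σ) (hτ : T.LocallyInjective τ)
    {z : Set ((Interaction S T A σ τ).proj V).Evt}
    (hz : ((Interaction S T A σ τ).proj V).Config z) : eventsWithin V (unionGraph z) = z := by
  have hsub : z ⊆ eventsWithin V (unionGraph z) := fun t ht =>
    Set.subset_iUnion (fun t : z => t.val.val.val) ⟨t, ht⟩
  refine Set.Subset.antisymm (fun t ht => ?_) hsub
  obtain ⟨t', ht'⟩ := exists_subset_of_isPrime_of_subset_iUnion t.val.prop.2 ht fun t' =>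
    (isSecBij_unionGraph hz).isLowerPart_of_subset hσ hτ t'.val.val.prop.1 (hsub t'.prop)
  exact hz.mem_of_le t'.prop ht'

/-- The configurations of the interaction, projected to the events in `V`, are the secured
bijections covered by events in `V`. -/
def configurationIso (hσ : S.LocallyInjective σ) (hτ : T.LocallyInjective τ)
    (V : Set (Interaction S T A σ τ).Evt) :
    {G // IsSecBij S T A σ τ G ∧ CoveredBy V G} ≃o
      ((Interaction S T A σ τ).proj V).Configuration where
  toFun G := ⟨eventsWithin V G.val, config_eventsWithin hσ hτ G.prop.1⟩
  invFun z := ⟨unionGraph z.val, isSecBij_unionGraph z.prop, fun p hp => by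
    obtain ⟨t, ht⟩ := Set.mem_iUnion.1 hp
    exact ⟨t.val.val, t.val.prop, Set.subset_iUnion (fun t : z.val => t.val.val.val) t, ht⟩⟩
  left_inv G := Subtype.ext (unionGraph_eventsWithin G.prop.2)
  right_inv z := Subtype.ext (eventsWithin_unionGraph hσ hτ z.prop)
  map_rel_iff' := by
    refine fun {G H} => ⟨fun hle p hp => ?_, fun hle t ht => Set.Subset.trans ht hle⟩
    obtain ⟨t, htV, htG, hpt⟩ := G.prop.2 p hp
    exact hle (show (⟨t, htV⟩ : ((Interaction S T A σ τ).proj V).Evt) ∈ eventsWithin V G.val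
      from htG) hpt

end Interaction

end Interaction

theorem SecuredOn.of_monotone {S T : ES} {G : Set (S.Evt × T.Evt)} {P : Type*} [PartialOrder P]
    (key : S.Evt × T.Evt → P) (hmono : ∀ p q, gRel S T G p q → key p ≤ key q)
    (hinj : G.InjOn key) : SecuredOn S T G := by
  have key_le : ∀ {p q}, inducedLE S T G p q → key p ≤ key q := fun hpq => by
    induction hpq with
    | refl => exact le_rfl
    | tail _ hqr ih => exact ih.trans (hmono _ _ hqr)
  intro p q hpq hqp
  rcases hpq.cases_head with rfl | ⟨_, hp, -⟩
  · rfl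
  rcases hqp.cases_head with rfl | ⟨_, hq, -⟩
  · rfl
  exact hinj hp.1 hq.1 ((key_le hpq).antisymm (key_le hqp))

theorem cc_config_iff {A : ESP} (hA : A.toES.IsES) {z : Set (CC A).Evt} :
    (CC A).toES.Config z ↔ A.toES.Config (Sum.inl ⁻¹' z) ∧ A.toES.Config (Sum.inr ⁻¹' z) ∧
      scottLE A.pol (Sum.inr ⁻¹' z) (Sum.inl ⁻¹' z) := by
  rw [scottLE_iff, ← and_assoc]
  refine Iff.trans ?_ (and_congr_left' (ES.par_config_iff (E := A.toES) (F := A.toES)))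
  constructor
  · rintro ⟨hfin, hcon, hdown⟩
    refine ⟨⟨hfin, fun Y hY hYfin => ?_, fun b hb a hab => hdown b hb a (.single (Or.inl hab))⟩,
      fun a ha hpol => hdown _ ha _ (.single (Or.inr (Or.inl ⟨a, hpol, rfl, rfl⟩))),
      fun a ha hpol => hdown _ ha _ (.single (Or.inr (Or.inr ⟨a, hpol, rfl, rfl⟩)))⟩
    have hYcon := hcon Y hY hYfin
    exact ⟨hA.mem_con_of_subset hYcon.1 fun a ha => ⟨_, ha, .refl⟩,
      hA.mem_con_of_subset hYcon.2 fun a ha => ⟨_, ha, .refl⟩⟩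
  · rintro ⟨⟨hfin, hcon, hdown⟩, hpos, hneg⟩
    have hclosed : ∀ b ∈ z, ∀ a, (CC A).le a b → a ∈ z := fun b hb a hab => by
      refine Relation.ReflTransGen.head_induction_on hab hb fun hac _ hc => ?_
      rcases hac with hac | ⟨a, hpol, rfl, rfl⟩ | ⟨a, hpol, rfl, rfl⟩
      exacts [hdown _ hc _ hac, hpos a hc hpol, hneg a hc hpol]
    refine ⟨hfin, fun Y hY _ => ?_, hclosed⟩
    have hsub : {a | ∃ b ∈ Y, (CC A).le a b} ⊆ z := fun a ⟨b, hb, hab⟩ => hclosed b (hY hb) a hab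
    exact hcon _ hsub (hfin.subset hsub)

section SumSets

variable {α β γ : Type*}

theorem preimage_inl_image_union (x : Set α) (y : Set β) :
    Sum.inl ⁻¹' (Sum.inl '' x ∪ Sum.inr '' y) = x :=
  congrArg Prod.fst (Set.sumEquiv.apply_symm_apply (x, y))

theorem preimage_inr_image_union (x : Set α) (y : Set β) :
    Sum.inr ⁻¹' (Sum.inl '' x ∪ Sum.inr '' y) = y :=
  congrArg Prod.snd (Set.sumEquiv.apply_symm_apply (x, y))

theorem image_sumMap_id_image_union (f : α → γ) (x : Set α) (y : Set β) :
    Sum.map f id '' (Sum.inl '' x ∪ Sum.inr '' y) = Sum.inl '' (f '' x) ∪ Sum.inr '' y := by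
  rw [Set.image_union]
  simp only [Set.image_image, Sum.map_inl, Sum.map_inr, id_eq]

end SumSets

section Copycat

variable {A S : ESP} {σ : S.Evt → A.Evt} {x x' : Set S.Evt} {y y' : Set A.Evt}

/-- The pairs `(x, y)` of configurations with `y ⊑ σ x`: they represent the configurations of
`CC_A ⊛ S`. -/
structure Interacting (σ : S.Evt → A.Evt) (x : Set S.Evt) (y : Set A.Evt) : Prop where
  config_left : S.toES.Config x
  config_right : A.toES.Config y
  le_image : scottLE A.pol y (σ '' x)

theorem mk_mem_ccGraph_iff {u : S.Evt ⊕ A.Evt} {v : A.Evt ⊕ A.Evt} :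
    (u, v) ∈ ccGraph A S σ x y ↔ u ∈ Sum.inl '' x ∪ Sum.inr '' y ∧ v = Sum.map σ id u :=
  Iff.rfl

theorem inl_mem_ccGraph_iff {s : S.Evt} :
    (Sum.inl s, Sum.inl (σ s)) ∈ ccGraph A S σ x y ↔ s ∈ x := by
  simp [mk_mem_ccGraph_iff]

theorem inr_mem_ccGraph_iff {a : A.Evt} :
    (Sum.inr a, Sum.inr a) ∈ ccGraph A S σ x y ↔ a ∈ y := by
  simp [mk_mem_ccGraph_iff]

theorem ccGraph_subset_ccGraph_iff :
    ccGraph A S σ x y ⊆ ccGraph A S σ x' y' ↔ x ⊆ x' ∧ y ⊆ y' := by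
  refine ⟨fun hsub => ⟨fun s hs => inl_mem_ccGraph_iff.1 (hsub (inl_mem_ccGraph_iff.2 hs)),
    fun a ha => inr_mem_ccGraph_iff.1 (hsub (inr_mem_ccGraph_iff.2 ha))⟩, ?_⟩
  rintro ⟨hx, hy⟩ p ⟨hp, heq⟩
  exact ⟨Set.union_subset_union (Set.image_mono hx) (Set.image_mono hy) hp, heq⟩

/-- A key whose lexicographic order extends the induced order of `ccGraph A S σ x y`. The first
component assigns the same set to `s` in `x` and to `σ s` on the right; the last one decides which
of the two copycat plays first. -/
def syncKey (σ : S.Evt → A.Evt) (x : Set S.Evt) :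
    S.Evt ⊕ A.Evt → Set S.Evt ×ₗ Set A.Evt ×ₗ Bool
  | Sum.inl s => toLex (S.causes s, toLex (A.causes (σ s), !A.pol (σ s)))
  | Sum.inr a => toLex ({s | ∃ t ∈ x, S.le s t ∧ A.le (σ t) a}, toLex (A.causes a, A.pol a))

theorem syncKey_inr_map (hS : S.toES.IsES) (hA : A.toES.IsES) (hσ : IsMap S.toES A.toES σ)
    (hx : S.toES.Config x) {s : S.Evt} (hs : s ∈ x) :
    syncKey σ x (Sum.inr (σ s)) = toLex (S.causes s, toLex (A.causes (σ s), A.pol (σ s))) := by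
  have hfirst : {r | ∃ t ∈ x, S.le r t ∧ A.le (σ t) (σ s)} = S.causes s := by
    ext r
    exact ⟨fun ⟨t, ht, hrt, hts⟩ => hS.le_trans hrt (hσ.le_of_map_le hS hx ht hs hts),
      fun hrs => ⟨s, hs, hrs, hA.le_refl _⟩⟩
  rw [syncKey, hfirst]

theorem syncKey_inl_le_inl (hS : S.toES.IsES) {s t : S.Evt} (hst : S.le s t) :
    syncKey σ x (Sum.inl s) ≤ syncKey σ x (Sum.inl t) := by
  by_cases heq : s = t
  · rw [heq]
  refine Prod.Lex.toLex_le_toLex.2 (Or.inl (LE.le.ssubset_of_ne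
    (fun _ hr => hS.le_trans hr hst) fun hcauses => heq (hS.le_antisymm hst ?_)))
  exact (show S.causes s = S.causes t from hcauses).ge (hS.le_refl t)

theorem syncKey_inr_le_inr (hA : A.toES.IsES) {a b : A.Evt} (hab : A.le a b) :
    syncKey σ x (Sum.inr a) ≤ syncKey σ x (Sum.inr b) := by
  by_cases heq : a = b
  · rw [heq]
  have hsecond : A.causes a ⊂ A.causes b := LE.le.ssubset_of_ne
    (fun _ hr => hA.le_trans hr hab) fun hcauses =>
      heq (hA.le_antisymm hab (hcauses ▸ hA.le_refl b : b ∈ A.causes a))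
  exact Prod.Lex.toLex_mono ⟨fun s ⟨t, ht, hst, hta⟩ => ⟨t, ht, hst, hA.le_trans hta hab⟩,
    Prod.Lex.toLex_le_toLex.2 (Or.inl hsecond)⟩

theorem syncKey_injOn (hA : A.toES.IsES) (hσ : x.InjOn σ) :
    (Sum.inl '' x ∪ Sum.inr '' y : Set (S.Evt ⊕ A.Evt)).InjOn (syncKey σ x) := by
  have causes_inj : ∀ {a b}, A.causes a = A.causes b → a = b := fun {a b} hab =>
    hA.le_antisymm (hab ▸ hA.le_refl a : a ∈ A.causes b) (hab ▸ hA.le_refl b : b ∈ A.causes a)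
  rintro _ (⟨s, hs, rfl⟩ | ⟨a, -, rfl⟩) _ (⟨t, ht, rfl⟩ | ⟨b, -, rfl⟩) heq <;>
    simp only [syncKey, EmbeddingLike.apply_eq_iff_eq, Prod.mk.injEq] at heq
  · rw [hσ hs ht (causes_inj heq.2.1)]
  · simp [causes_inj heq.2.1] at heq
  · simp [causes_inj heq.2.1] at heq
  · rw [causes_inj heq.2.1]

theorem syncKey_inl_le_inr_map (hS : S.toES.IsES) (hA : A.toES.IsES) (hσ : IsMap S.toES A.toES σ)
    (hx : S.toES.Config x) {s : S.Evt} (hs : s ∈ x) (hpol : A.pol (σ s) = true) :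
    syncKey σ x (Sum.inl s) ≤ syncKey σ x (Sum.inr (σ s)) := by
  rw [syncKey_inr_map hS hA hσ hx hs]
  exact Prod.Lex.toLex_mono ⟨le_rfl, Prod.Lex.toLex_mono ⟨le_rfl, by simp [hpol]⟩⟩

theorem syncKey_inr_map_le_inl (hS : S.toES.IsES) (hA : A.toES.IsES) (hσ : IsMap S.toES A.toES σ)
    (hx : S.toES.Config x) {s : S.Evt} (hs : s ∈ x) (hpol : A.pol (σ s) = false) :
    syncKey σ x (Sum.inr (σ s)) ≤ syncKey σ x (Sum.inl s) := by
  rw [syncKey_inr_map hS hA hσ hx hs]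
  exact Prod.Lex.toLex_mono ⟨le_rfl, Prod.Lex.toLex_mono ⟨le_rfl, by simp [hpol]⟩⟩

theorem ES.LocallyInjective.sumMap_id (hσ : S.toES.LocallyInjective σ) :
    (S.toES.par A.toES).LocallyInjective (Sum.map σ id) := by
  rintro X hX (s | a) hs (t | b) ht heq
  · exact congrArg Sum.inl (hσ _ (ES.par_config_iff.1 hX).1 hs ht (Sum.inl_injective heq))
  · cases heq
  · cases heq
  · exact congrArg Sum.inr (Sum.inr_injective heq)

namespace Interacting

theorem exists_syncKey_le_of_ccGen (hS : S.toES.IsES) (hA : A.toES.IsES)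
    (hσ : IsMap S.toES A.toES σ) (hxy : Interacting σ x y) {c : A.Evt ⊕ A.Evt}
    {v : S.Evt ⊕ A.Evt} (hv : v ∈ Sum.inl '' x ∪ Sum.inr '' y)
    (hstep : ccGen A c (Sum.map σ id v)) :
    ∃ u ∈ Sum.inl '' x ∪ Sum.inr '' y, Sum.map σ id u = c ∧ syncKey σ x u ≤ syncKey σ x v := by
  have hx := hxy.config_left
  have hle := scottLE_iff.1 hxy.le_image
  rcases hv with ⟨s, hs, rfl⟩ | ⟨b, hb, rfl⟩
  · rcases hstep with hstep | ⟨_, -, -, ⟨⟩⟩ | ⟨_, hpol, rfl, ⟨⟩⟩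
    · obtain ⟨a, rfl, has⟩ : ∃ a, c = Sum.inl a ∧ A.le a (σ s) := by
        rcases c with a | a
        exacts [⟨a, rfl, hstep⟩, hstep.elim]
      obtain ⟨t, hts, rfl⟩ := (hσ.1 _ (hS.config_causes s)).mem_of_le
        (Set.mem_image_of_mem σ (hS.le_refl s)) has
      exact ⟨Sum.inl t, Or.inl ⟨t, hx.mem_of_le hs hts, rfl⟩, rfl, syncKey_inl_le_inl hS hts⟩
    · exact ⟨Sum.inr (σ s), Or.inr ⟨_, hle.2 _ (Set.mem_image_of_mem σ hs) hpol, rfl⟩, rfl,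
        syncKey_inr_map_le_inl hS hA hσ hx hs hpol⟩
  · rcases hstep with hstep | ⟨_, hpol, rfl, ⟨⟩⟩ | ⟨_, -, -, ⟨⟩⟩
    · obtain ⟨a, rfl, hab⟩ : ∃ a, c = Sum.inr a ∧ A.le a b := by
        rcases c with a | a
        exacts [hstep.elim, ⟨a, rfl, hstep⟩]
      exact ⟨Sum.inr a, Or.inr ⟨a, hxy.config_right.mem_of_le hb hab, rfl⟩, rfl,
        syncKey_inr_le_inr hA hab⟩
    · obtain ⟨s, hs, rfl⟩ := hle.1 _ hb hpol
      exact ⟨Sum.inl s, Or.inl ⟨s, hs, rfl⟩, rfl, syncKey_inl_le_inr_map hS hA hσ hx hs hpol⟩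

theorem config_union (hxy : Interacting σ x y) :
    (S.toES.par A.toES).Config (Sum.inl '' x ∪ Sum.inr '' y : Set (S.Evt ⊕ A.Evt)) := by
  refine ES.par_config_iff.2 ?_
  rw [preimage_inl_image_union, preimage_inr_image_union]
  exact ⟨hxy.config_left, hxy.config_right⟩

theorem exists_syncKey_le (hS : S.toES.IsES) (hA : A.toES.IsES) (hσ : IsMap S.toES A.toES σ)
    (hxy : Interacting σ x y) {c : A.Evt ⊕ A.Evt} {v : S.Evt ⊕ A.Evt}
    (hv : v ∈ Sum.inl '' x ∪ Sum.inr '' y) (hcv : (CC A).le c (Sum.map σ id v)) :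
    ∃ u ∈ Sum.inl '' x ∪ Sum.inr '' y, Sum.map σ id u = c ∧ syncKey σ x u ≤ syncKey σ x v := by
  induction hcv using Relation.ReflTransGen.head_induction_on with
  | refl => exact ⟨v, hv, rfl, le_rfl⟩
  | head hstep _ ih =>
    obtain ⟨u, hu, rfl, huv⟩ := ih
    obtain ⟨w, hw, heq, hwu⟩ := hxy.exists_syncKey_le_of_ccGen hS hA hσ hu hstep
    exact ⟨w, hw, heq, hwu.trans huv⟩

theorem syncKey_le_of_gRel (hS : S.toES.IsES) (hA : A.toES.IsES) (hσ : IsMap S.toES A.toES σ)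
    (hxy : Interacting σ x y) {p q : (S.Evt ⊕ A.Evt) × (A.Evt ⊕ A.Evt)}
    (hpq : gRel (S.toES.par A.toES) (CC A).toES (ccGraph A S σ x y) p q) :
    syncKey σ x p.1 ≤ syncKey σ x q.1 := by
  obtain ⟨u, c⟩ := p
  obtain ⟨v, d⟩ := q
  obtain ⟨⟨hu, hc⟩, ⟨hv, hd⟩, hlt | hlt⟩ := hpq
  · rcases u with s | a <;> rcases v with t | b
    exacts [syncKey_inl_le_inl hS hlt.1, hlt.1.elim, hlt.1.elim, syncKey_inr_le_inr hA hlt.1]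
  · obtain ⟨w, hw, hwu, hwv⟩ := hxy.exists_syncKey_le hS hA hσ hv (c := c) (hd ▸ hlt.1)
    exact (ES.LocallyInjective.sumMap_id hσ.2) _ hxy.config_union hw hu (hwu.trans hc) ▸ hwv

theorem isSecBij_ccGraph (hS : S.toES.IsES) (hA : A.toES.IsES) (hσ : IsMap S.toES A.toES σ)
    (hxy : Interacting σ x y) :
    IsSecBij (S.toES.par A.toES) (CC A).toES (A.toES.par A.toES) (Sum.map σ id) id
      (ccGraph A S σ x y) := by
  have hfst : Prod.fst '' ccGraph A S σ x y = Sum.inl '' x ∪ Sum.inr '' y := by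
    ext u
    exact ⟨by rintro ⟨p, hp, rfl⟩; exact hp.1, fun hu => ⟨(u, Sum.map σ id u), ⟨hu, rfl⟩, rfl⟩⟩
  have hmap : ∀ p ∈ ccGraph A S σ x y, Sum.map σ id p.1 = p.2 := fun p hp => hp.2.symm
  have hsnd : Prod.snd '' ccGraph A S σ x y = Sum.inl '' (σ '' x) ∪ Sum.inr '' y := by
    rw [← Set.image_congr hmap, ← Set.image_image, hfst, image_sumMap_id_image_union]
  refine ⟨?_, ?_, hmap, ?_, ?_, ?_⟩
  · exact hfst.symm.subst (motive := (S.toES.par A.toES).Config) hxy.config_union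
  · refine hsnd.symm.subst (motive := (CC A).toES.Config) ((cc_config_iff hA).2 ?_)
    rw [preimage_inl_image_union, preimage_inr_image_union]
    exact ⟨hσ.1 x hxy.config_left, hxy.config_right, hxy.le_image⟩
  · rintro s hs t - heq
    exact ⟨hfst.subset hs, heq.symm⟩
  · exact (Set.image_image _ _ _).trans ((Set.image_congr hmap).trans (Set.image_id _).symm)
  · refine SecuredOn.of_monotone (fun p => syncKey σ x p.1)
      (fun _ _ => hxy.syncKey_le_of_gRel hS hA hσ) fun p hp q hq heq => ?_
    have hpq := syncKey_injOn hA (hσ.2 x hxy.config_left) hp.1 hq.1 heq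
    exact Prod.ext hpq (by rw [hp.2, hq.2, hpq])

end Interacting

theorem exists_interacting_of_isSecBij (hA : A.toES.IsES)
    {G : Set ((S.Evt ⊕ A.Evt) × (A.Evt ⊕ A.Evt))}
    (hG : IsSecBij (S.toES.par A.toES) (CC A).toES (A.toES.par A.toES) (Sum.map σ id) id G) :
    ∃ x y, Interacting σ x y ∧ ccGraph A S σ x y = G := by
  obtain ⟨hfst, hsnd, hmap, hmem, himg, -⟩ := hG
  obtain ⟨x, y, hunion⟩ : ∃ x y, Prod.fst '' G = Sum.inl '' x ∪ Sum.inr '' y :=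
    ⟨_, _, (Set.image_preimage_inl_union_image_preimage_inr _).symm⟩
  have hsnd_eq : Prod.snd '' G = Sum.inl '' (σ '' x) ∪ Sum.inr '' y := by
    rw [← image_sumMap_id_image_union, ← hunion]
    exact (Set.image_id _).symm.trans himg.symm
  have hpar := ES.par_config_iff.1 (hunion.subst (motive := (S.toES.par A.toES).Config) hfst)
  have hcc := (cc_config_iff hA).1 (hsnd_eq.subst (motive := (CC A).toES.Config) hsnd)
  rw [preimage_inl_image_union, preimage_inr_image_union] at hpar
  rw [preimage_inl_image_union, preimage_inr_image_union] at hcc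
  refine ⟨x, y, ⟨hpar.1, hpar.2, hcc.2.2⟩, Set.ext fun ⟨u, v⟩ => ?_⟩
  rw [mk_mem_ccGraph_iff, ← hunion]
  refine ⟨fun ⟨hu, hv⟩ => hmem u hu v ?_ hv.symm, fun hp => ⟨⟨_, hp, rfl⟩, (hmap _ hp).symm⟩⟩
  exact (Set.image_id _).subset (himg.subset ⟨u, hu, hv.symm⟩)

/-- The events of `x` that the visible part of an interaction remembers: those below a positive
event which copycat has already forwarded to `y`. -/
def visPart (σ : S.Evt → A.Evt) (x : Set S.Evt) (y : Set A.Evt) : Set S.Evt :=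
  {s | ∃ t ∈ x, S.le s t ∧ S.pol t = true ∧ σ t ∈ y}

theorem visPart_subset (hx : S.toES.Config x) : visPart σ x y ⊆ x :=
  fun _ ⟨_, ht, hst, _⟩ => hx.mem_of_le ht hst

theorem mem_visPart (hS : S.toES.IsES) {s : S.Evt} (hs : s ∈ x) (hpol : S.pol s = true)
    (hsy : σ s ∈ y) : s ∈ visPart σ x y :=
  ⟨s, hs, hS.le_refl s, hpol, hsy⟩

theorem visPart_mono (hx : x ⊆ x') (hy : y ⊆ y') : visPart σ x y ⊆ visPart σ x' y' :=
  fun _ ⟨t, ht, hst, hpol, hty⟩ => ⟨t, hx ht, hst, hpol, hy hty⟩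

theorem visPart_congr (h : ∀ s, S.pol s = true → σ s ∈ y → (s ∈ x ↔ s ∈ x')) :
    visPart σ x y = visPart σ x' y := by
  ext s
  exact ⟨fun ⟨t, ht, hst, hpol, hty⟩ => ⟨t, (h t hpol hty).1 ht, hst, hpol, hty⟩,
    fun ⟨t, ht, hst, hpol, hty⟩ => ⟨t, (h t hpol hty).2 ht, hst, hpol, hty⟩⟩

theorem visPart_visPart (hS : S.toES.IsES) (hx : S.toES.Config x) :
    visPart σ (visPart σ x y) y = visPart σ x y :=
  visPart_congr fun _ hpol hsy => ⟨fun hs => visPart_subset hx hs, fun hs =>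
    mem_visPart hS hs hpol hsy⟩

theorem Interacting.restrict_visPart (hS : S.toES.IsES) (hσ : ∀ s, A.pol (σ s) = S.pol s)
    (hxy : Interacting σ x y) : Interacting σ (visPart σ x y) y := by
  have hsub : visPart σ x y ⊆ x := visPart_subset hxy.config_left
  have hle := scottLE_iff.1 hxy.le_image
  refine ⟨hxy.config_left.of_subset hsub fun _ ⟨t, ht, hst, hvis⟩ _ hrs =>
    ⟨t, ht, hS.le_trans hrs hst, hvis⟩, hxy.config_right, scottLE_iff.2 ⟨fun a ha hpol => ?_,
      fun a ha hpol => hle.2 a (Set.image_mono hsub ha) hpol⟩⟩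
  obtain ⟨s, hs, rfl⟩ := hle.1 a ha hpol
  exact Set.mem_image_of_mem σ (mem_visPart hS hs ((hσ s).symm.trans hpol) ha)

theorem inducedLE_ccGraph_inr_map (hx : S.toES.Config x) {s t : S.Evt}
    (ht : t ∈ x) (hst : S.le s t) (hpol : A.pol (σ t) = true) (hty : σ t ∈ y) :
    inducedLE (S.toES.par A.toES) (CC A).toES (ccGraph A S σ x y)
      (Sum.inl s, Sum.inl (σ s)) (Sum.inr (σ t), Sum.inr (σ t)) := by
  have hs := inl_mem_ccGraph_iff (σ := σ) (y := y).2 (hx.mem_of_le ht hst)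
  have ht' := inl_mem_ccGraph_iff (σ := σ) (y := y).2 ht
  have hforward : gRel (S.toES.par A.toES) (CC A).toES (ccGraph A S σ x y)
      (Sum.inl t, Sum.inl (σ t)) (Sum.inr (σ t), Sum.inr (σ t)) :=
    ⟨ht', inr_mem_ccGraph_iff.2 hty,
      Or.inr ⟨.single (Or.inr (Or.inl ⟨σ t, hpol, rfl, rfl⟩)), Sum.inl_ne_inr⟩⟩
  by_cases heq : s = t
  · subst heq
    exact .single hforward
  · exact .head ⟨hs, ht', Or.inl ⟨hst, fun h => heq (Sum.inl_injective h)⟩⟩ (.single hforward)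

theorem Interacting.coveredBy_ccGraph_iff (hS : S.toES.IsES) (hA : A.toES.IsES)
    (hσ : IsPreStrategy S A σ) (hxy : Interacting σ x y) :
    Interaction.CoveredBy {G | ccVis A S σ G} (ccGraph A S σ x y) ↔ visPart σ x y = x := by
  have hG := hxy.isSecBij_ccGraph hS hA hσ.1
  have hinj := ES.LocallyInjective.sumMap_id (A := A) hσ.1.2
  have hid := (CC A).toES.locallyInjective_id
  constructor
  · refine fun hcov => (visPart_subset hxy.config_left).antisymm fun s hs => ?_
    obtain ⟨t, ⟨a, ha, htop⟩, htG, hst⟩ := hcov _ (inl_mem_ccGraph_iff.2 hs)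
    have hlower := hG.isLowerPart_of_subset hinj hid
      ((hxy.restrict_visPart hS hσ.2).isSecBij_ccGraph hS hA hσ.1)
      (ccGraph_subset_ccGraph_iff.2 ⟨visPart_subset hxy.config_left, subset_rfl⟩)
    exact inl_mem_ccGraph_iff.1 (hlower.mem_and_inducedLE (inducedLE_mono htG (htop _ hst))
      (inr_mem_ccGraph_iff.2 (inr_mem_ccGraph_iff.1 (htG ha)))).1
  · rintro hvis ⟨u, v⟩ hp
    obtain ⟨a, ha, hle⟩ : ∃ a ∈ y, inducedLE (S.toES.par A.toES) (CC A).toES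
        (ccGraph A S σ x y) (u, v) (Sum.inr a, Sum.inr a) := by
      obtain ⟨⟨s, hs, rfl⟩ | ⟨a, ha, rfl⟩, rfl⟩ := mk_mem_ccGraph_iff.1 hp
      · obtain ⟨t, ht, hst, hpol, hty⟩ := hvis.ge hs
        exact ⟨σ t, hty, inducedLE_ccGraph_inr_map hxy.config_left ht hst
          ((hσ.2 t).trans hpol) hty⟩
      · exact ⟨a, ha, .refl⟩
    have ha' := inr_mem_ccGraph_iff (σ := σ) (x := x).2 ha
    exact ⟨Interaction.primeBelow hid hG ha', ⟨a, ⟨ha', .refl⟩, fun _ => inducedLE_downPart ha'⟩,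
      Set.sep_subset _ _, hp, hle⟩

/-- The pairs `(x, y)` with `y ⊑ σ x` in which every event of `x` is remembered. They represent the
configurations of `CC_A ⊙ S`, a configuration being sent to its minimal witness. -/
abbrev Witness (σ : S.Evt → A.Evt) : Type :=
  {w : Set S.Evt × Set A.Evt // Interacting σ w.1 w.2 ∧ visPart σ w.1 w.2 = w.1}

/-- The bijections covered by visible events are the graphs of the elements of `Witness σ`. -/
noncomputable def witnessGraphIso (hS : S.toES.IsES) (hA : A.toES.IsES)
    (hσ : IsPreStrategy S A σ) :
    Witness σ ≃o {G // IsSecBij (S.toES.par A.toES) (CC A).toES (A.toES.par A.toES)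
      (Sum.map σ id) id G ∧ Interaction.CoveredBy {G | ccVis A S σ G} G} :=
  RelIso.ofSurjective
    (OrderEmbedding.ofMapLEIff
      (fun w => ⟨ccGraph A S σ w.1.1 w.1.2, w.2.1.isSecBij_ccGraph hS hA hσ.1,
        (w.2.1.coveredBy_ccGraph_iff hS hA hσ).2 w.2.2⟩)
      fun _ _ => ccGraph_subset_ccGraph_iff)
    fun ⟨G, hG, hcov⟩ => by
      obtain ⟨x, y, hxy, rfl⟩ := exists_interacting_of_isSecBij hA hG
      exact ⟨⟨(x, y), hxy, (hxy.coveredBy_ccGraph_iff hS hA hσ).1 hcov⟩, rfl⟩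

/-- The configurations of `CC_A ⊙ S` are the elements of `Witness σ`. -/
noncomputable def witnessIso (hS : S.toES.IsES) (hA : A.toES.IsES) (hσ : IsPreStrategy S A σ) :
    Witness σ ≃o (ccCompES A S σ).Configuration :=
  (witnessGraphIso hS hA hσ).trans <| Interaction.configurationIso
    (ES.LocallyInjective.sumMap_id hσ.1.2) (ES.locallyInjective_id _) _

theorem ccCompLabel_eq {t : (ccCompES A S σ).Evt} {a : A.Evt}
    (ha : (Sum.inr a, Sum.inr a) ∈ t.val.val)
    (htop : ∀ q ∈ t.val.val, inducedLE (S.toES.par A.toES) (CC A).toES t.val.val q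
      (Sum.inr a, Sum.inr a)) : ccCompLabel A S σ t = a := by
  obtain ⟨hmem, htop'⟩ := Exists.choose_spec t.prop
  have heq := t.val.prop.1.2.2.2.2.2 _ _ (htop _ hmem) (htop' _ ha)
  exact Sum.inr_injective (congrArg Prod.fst heq)

theorem image_ccCompLabel_witnessIso (hS : S.toES.IsES) (hA : A.toES.IsES)
    (hσ : IsPreStrategy S A σ) (w : Witness σ) :
    ccCompLabel A S σ '' (witnessIso hS hA hσ w).1 = w.1.2 := by
  ext a
  constructor
  · rintro ⟨t, ht, rfl⟩
    exact inr_mem_ccGraph_iff.1 (ht (Exists.choose_spec t.prop).1)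
  · intro ha
    have ha' := inr_mem_ccGraph_iff (σ := σ) (x := w.1.1).2 ha
    have htop := fun q => inducedLE_downPart (S := S.toES.par A.toES) (T := (CC A).toES)
      (q := q) ha'
    exact ⟨⟨Interaction.primeBelow (ES.locallyInjective_id _)
        (w.2.1.isSecBij_ccGraph hS hA hσ.1) ha', a, ⟨ha', .refl⟩, htop⟩,
      Set.sep_subset _ _, ccCompLabel_eq ⟨ha', .refl⟩ htop⟩

theorem locallyInjective_ccCompLabel (hσ : S.toES.LocallyInjective σ) :
    (ccCompES A S σ).LocallyInjective (ccCompLabel A S σ) := by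
  intro z hz t ht t' ht' heq
  have hinj := ES.LocallyInjective.sumMap_id (A := A) hσ
  have hid := (CC A).toES.locallyInjective_id
  have val_eq : ∀ t ∈ z, t.val.val = downPart (S.toES.par A.toES) (CC A).toES
      (Interaction.unionGraph z)
      (Sum.inr (ccCompLabel A S σ t), Sum.inr (ccCompLabel A S σ t)) := fun t ht =>
    ((Interaction.isSecBij_unionGraph hz).isLowerPart_of_subset hinj hid t.val.prop.1
      (Set.subset_iUnion (fun t : z => t.val.val.val) ⟨t, ht⟩)).eq_downPart
      (Exists.choose_spec t.prop).1 (Exists.choose_spec t.prop).2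
  exact Subtype.ext (Subtype.ext ((val_eq t ht).trans (heq ▸ (val_eq t' ht').symm)))

theorem config_causes_ccCompES (hσ : S.toES.LocallyInjective σ) (t : (ccCompES A S σ).Evt) :
    (ccCompES A S σ).Config ((ccCompES A S σ).causes t) :=
  Interaction.config_eventsWithin (ES.LocallyInjective.sumMap_id hσ)
    (ES.locallyInjective_id _) t.val.prop.1

end Copycat

section ConfigurationIso

variable {S T : ES} {α : Type*} {σ : S.Evt → α} {τ : T.Evt → α}

theorem exists_map_of_monotone (hT : T.LocallyInjective τ)
    (hScauses : ∀ s, S.Config (S.causes s)) (hSrefl : ∀ s, S.le s s)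
    {φ : S.Configuration → T.Configuration} (hmono : Monotone φ)
    (hφ : ∀ x, τ '' (φ x).1 = σ '' x.1) :
    ∃ f : S.Evt → T.Evt, (∀ s, τ (f s) = σ s) ∧ ∀ x, f '' x.1 = (φ x).1 := by
  have exists_lift : ∀ s, ∃ t ∈ (φ ⟨S.causes s, hScauses s⟩).1, τ t = σ s := fun s =>
    (hφ ⟨S.causes s, hScauses s⟩).ge (Set.mem_image_of_mem σ (hSrefl s))
  choose f hfmem hf using exists_lift
  refine ⟨f, hf, fun x => ?_⟩
  have hsub : f '' x.1 ⊆ (φ x).1 := Set.image_subset_iff.2 fun s hs =>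
    hmono (show ⟨S.causes s, hScauses s⟩ ≤ x from x.2.causes_subset hs) (hfmem s)
  refine (hT _ (φ x).2).image_eq_image_iff hsub subset_rfl |>.1 ?_
  rw [hφ, Set.image_image]
  exact Set.image_congr fun s _ => hf s

theorem leftInverse_of_image_eq (hS : S.LocallyInjective σ) (hScauses : ∀ s, S.Config (S.causes s))
    (hSrefl : ∀ s, S.le s s) {h : S.Evt → S.Evt} (hσh : ∀ s, σ (h s) = σ s)
    (himg : ∀ x, S.Config x → h '' x = x) (s : S.Evt) : h s = s :=
  hS _ (hScauses s) ((himg _ (hScauses s)).subset (Set.mem_image_of_mem h (hSrefl s))) (hSrefl s)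
    (hσh s)

end ConfigurationIso

theorem preStratIso_iff_exists_orderIso {S T A : ESP} {σ : S.Evt → A.Evt} {τ : T.Evt → A.Evt}
    (hσ : S.toES.LocallyInjective σ) (hτ : T.toES.LocallyInjective τ)
    (hScauses : ∀ s, S.toES.Config (S.causes s)) (hTcauses : ∀ t, T.toES.Config (T.causes t))
    (hSrefl : ∀ s, S.le s s) (hTrefl : ∀ t, T.le t t) :
    PreStratIso S T A σ τ ↔
      ∃ φ : S.toES.Configuration ≃o T.toES.Configuration, ∀ x, τ '' (φ x).1 = σ '' x.1 := by
  constructor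
  · rintro ⟨f, g, hf, hg, hgf, hfg, hτf⟩
    refine ⟨⟨⟨fun x => ⟨f '' x.1, hf.1 _ x.2⟩, fun y => ⟨g '' y.1, hg.1 _ y.2⟩,
      fun x => Subtype.ext (Function.LeftInverse.image_image hgf x.1),
      fun y => Subtype.ext (Function.LeftInverse.image_image hfg y.1)⟩,
      Set.image_subset_image_iff (Function.LeftInverse.injective hgf)⟩, fun x => ?_⟩
    exact (Set.image_image _ _ _).trans (Set.image_congr fun s _ => hτf s)
  · rintro ⟨φ, hφ⟩
    obtain ⟨f, hτf, hf⟩ := exists_map_of_monotone hτ hScauses hSrefl φ.monotone hφ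
    obtain ⟨g, hσg, hg⟩ := exists_map_of_monotone hσ hTcauses hTrefl φ.symm.monotone fun y => by
      rw [← hφ, φ.apply_symm_apply]
    refine ⟨f, g, ⟨fun x hx => hf ⟨x, hx⟩ ▸ (φ ⟨x, hx⟩).2, fun x hx s hs s' hs' heq =>
        hσ x hx hs hs' (by rw [← hτf, ← hτf, heq])⟩,
      ⟨fun y hy => hg ⟨y, hy⟩ ▸ (φ.symm ⟨y, hy⟩).2, fun y hy t ht t' ht' heq =>
        hτ y hy ht ht' (by rw [← hσg, ← hσg, heq])⟩, ?_, ?_, hτf⟩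
    · refine leftInverse_of_image_eq hσ hScauses hSrefl (h := g ∘ f) (fun s => ?_) fun x hx => ?_
      · exact (hσg _).trans (hτf s)
      · rw [Set.image_comp, hf ⟨x, hx⟩, hg, φ.symm_apply_apply]
    · refine leftInverse_of_image_eq hτ hTcauses hTrefl (h := f ∘ g) (fun t => ?_) fun y hy => ?_
      · exact (hτf _).trans (hσg t)
      · rw [Set.image_comp, hg ⟨y, hy⟩, hf, φ.apply_symm_apply]

section Strategy

variable {A S : ESP} {σ : S.Evt → A.Evt} {x x' : Set S.Evt} {y y' : Set A.Evt}

theorem isStrategy_iff_exists_orderIso (hS : S.toES.IsES) (hA : A.toES.IsES)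
    (hσ : IsPreStrategy S A σ) :
    IsStrategy S A σ ↔
      ∃ φ : S.toES.Configuration ≃o Witness σ, ∀ x, (φ x).1.2 = σ '' x.1 := by
  have hlabel := image_ccCompLabel_witnessIso hS hA hσ
  have hiso : PreStratIso (ccCompESP A S σ) S A (ccCompLabel A S σ) σ ↔
      ∃ ψ : (ccCompES A S σ).Configuration ≃o S.toES.Configuration,
        ∀ z, σ '' (ψ z).1 = ccCompLabel A S σ '' z.1 :=
    preStratIso_iff_exists_orderIso (locallyInjective_ccCompLabel hσ.1.locallyInjective)
      hσ.1.locallyInjective (config_causes_ccCompES hσ.1.locallyInjective) hS.config_causes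
      (fun _ => Set.Subset.rfl) hS.le_refl
  refine (and_iff_right hσ).trans (hiso.trans ⟨fun ⟨ψ, hψ⟩ => ?_, fun ⟨φ, hφ⟩ => ?_⟩)
  · refine ⟨ψ.symm.trans (witnessIso hS hA hσ).symm, fun x => ?_⟩
    rw [← hlabel, OrderIso.trans_apply, OrderIso.apply_symm_apply, ← hψ, ψ.apply_symm_apply]
  · refine ⟨(witnessIso hS hA hσ).symm.trans φ.symm, fun z => ?_⟩
    rw [← hφ, OrderIso.trans_apply, OrderIso.apply_symm_apply, ← hlabel,
      OrderIso.apply_symm_apply]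

theorem fst_eq_visPart_of_comparable (hσ : IsPreStrategy S A σ) {w w' : Witness σ}
    (hle : scottLE A.pol w'.1.2 w.1.2) (hcomp : w' ≤ w ∨ w ≤ w') :
    w'.1.1 = visPart σ w.1.1 w'.1.2 := by
  have hxy := w.2.1
  have hxy' := w'.2.1
  refine w'.2.2.symm.trans (visPart_congr fun t hpol hty' => ?_)
  have hpol' := (hσ.2 t).trans hpol
  obtain ⟨r', hr', heq'⟩ := (scottLE_iff.1 hxy'.le_image).1 _ hty' hpol'
  obtain ⟨r, hr, heq⟩ := (scottLE_iff.1 (scottLE.trans hle hxy.le_image)).1 _ hty' hpol'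
  rcases hcomp with hsub | hsub
  · exact ⟨fun ht => hsub.1 ht,
      fun ht => hσ.1.2 _ hxy.config_left (hsub.1 hr') ht heq' ▸ hr'⟩
  · exact ⟨fun ht => hσ.1.2 _ hxy'.config_left (hsub.1 hr) ht heq ▸ hr,
      fun ht => hsub.1 ht⟩

theorem exists_witness_of_comparableScottLE (hS : S.toES.IsES)
    (hσ : ∀ s, A.pol (σ s) = S.pol s) (w : Witness σ) (hy : A.toES.Config y)
    (hyw : comparableScottLE A.pol y w.1.2) :
    ∃ w' : Witness σ, w'.1.2 = y ∧ (w' ≤ w ∨ w ≤ w') := by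
  obtain ⟨⟨x, y₀⟩, hxy, hvis⟩ := w
  have hxy' : Interacting σ x y := ⟨hxy.config_left, hy, hyw.1.trans hxy.le_image⟩
  refine ⟨⟨(visPart σ x y, y), hxy'.restrict_visPart hS hσ, visPart_visPart hS hxy.config_left⟩,
    rfl, hyw.2.imp (fun hsub => ⟨visPart_subset hxy.config_left, hsub⟩) fun hsub => ⟨?_, hsub⟩⟩
  exact hvis.ge.trans (visPart_mono subset_rfl hsub)

theorem comparable_fibration_of_orderIso (hσ : IsPreStrategy S A σ) (hS : S.toES.IsES)
    (φ : S.toES.Configuration ≃o Witness σ) (hφ : ∀ x, (φ x).1.2 = σ '' x.1) :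
    DiscFibOn S.toES A.toES σ (comparableScottLE S.pol) (comparableScottLE A.pol) := by
  refine ⟨fun x x' _ _ hxx' => ⟨hxx'.1.image hσ.2, hxx'.2.imp Set.image_mono Set.image_mono⟩,
    fun x hx y hy hyx => ?_⟩
  rw [← hφ ⟨x, hx⟩] at hyx
  obtain ⟨w, rfl, hcomp⟩ := exists_witness_of_comparableScottLE hS hσ.2 (φ ⟨x, hx⟩) hy hyx
  have himg : σ '' (φ.symm w).1 = w.1.2 := by rw [← hφ, φ.apply_symm_apply]
  have hcomp' : φ.symm w ≤ ⟨x, hx⟩ ∨ ⟨x, hx⟩ ≤ φ.symm w :=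
    hcomp.imp (φ.symm_apply_le).2 (φ.le_symm_apply).2
  refine ⟨(φ.symm w).1, ⟨(φ.symm w).2, ⟨scottLE_of_image hσ.2 ?_ ?_, hcomp'⟩, himg⟩, ?_⟩
  · rcases hcomp' with hsub | hsub
    · rw [Set.union_eq_right.2 hsub]
      exact hσ.1.2 x hx
    · rw [Set.union_eq_left.2 hsub]
      exact hσ.1.2 _ (φ.symm w).2
  · rw [himg, ← hφ ⟨x, hx⟩]
    exact hyx.1
  · rintro x' ⟨hx', hx'x, himg'⟩
    have hsnd : (φ ⟨x', hx'⟩).1.2 = w.1.2 := (hφ _).trans himg'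
    have hfst : (φ ⟨x', hx'⟩).1.1 = w.1.1 := by
      rw [fst_eq_visPart_of_comparable hσ hyx.1 hcomp, fst_eq_visPart_of_comparable hσ
        (hsnd ▸ hyx.1) (hx'x.2.imp φ.le_iff_le.2 φ.le_iff_le.2), hsnd]
    exact congrArg Subtype.val (φ.eq_symm_apply.2 (Subtype.ext (Prod.ext hfst hsnd)))

theorem exists_orderIso_of_courteous_of_receptive (hσ : IsPreStrategy S A σ) (hS : S.toES.IsES)
    (hcourt : Courteous S A σ) (hrec : Receptive S A σ)
    (hfib : DiscFibOn S.toES A.toES σ (scottLE S.pol) (scottLE A.pol)) :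
    ∃ φ : S.toES.Configuration ≃o Witness σ, ∀ x, (φ x).1.2 = σ '' x.1 := by
  let toWitness (x : S.toES.Configuration) : Witness σ :=
    ⟨(visPart σ x.1 (σ '' x.1), σ '' x.1),
      (Interacting.mk x.2 (hσ.1.1 _ x.2) (scottLE.refl _ _)).restrict_visPart hS hσ.2,
      visPart_visPart hS x.2⟩
  have toWitness_le_iff : ∀ x x', toWitness x ≤ toWitness x' ↔ x ≤ x' := by
    refine fun x x' => ⟨fun hle => ?_, fun hle => ⟨visPart_mono hle (Set.image_mono hle),
      Set.image_mono hle⟩⟩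
    refine hσ.subset_of_negative_extension hS hcourt hrec x.2 x'.2
      ⟨visPart_subset x.2, fun s hs hvis => ?_⟩ (hle.1.trans (visPart_subset x'.2)) hle.2
    exact Bool.eq_false_iff.2 fun hpol => hvis (mem_visPart hS hs hpol (Set.mem_image_of_mem σ hs))
  have toWitness_surjective : Function.Surjective toWitness := by
    rintro ⟨⟨x, y⟩, hxy, hvis⟩
    obtain ⟨x', ⟨hx', hx'x, rfl⟩, -⟩ := hfib.2 x hxy.config_left y hxy.config_right hxy.le_image
    refine ⟨⟨x', hx'⟩, Subtype.ext (Prod.ext ((visPart_congr fun s hpol hs => ?_).trans hvis) rfl)⟩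
    obtain ⟨s', hs', heq⟩ := hs
    refine ⟨fun hs => (scottLE_iff.1 hx'x).1 s hs hpol, fun hs => ?_⟩
    have hs'x := (scottLE_iff.1 hx'x).1 s' hs' (by rw [← hσ.2, heq, hσ.2, hpol])
    exact hσ.1.2 _ hxy.config_left hs'x hs heq ▸ hs'
  exact ⟨RelIso.ofSurjective (OrderEmbedding.ofMapLEIff toWitness toWitness_le_iff)
    toWitness_surjective, fun _ => rfl⟩

theorem isStrategy_iff_neg_and_pos (hS : S.toES.IsES) (hA : A.toES.IsES)
    (hσ : IsPreStrategy S A σ) :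
    IsStrategy S A σ ↔
      DiscFibOn S.toES A.toES σ (negLE S.pol) (negLE A.pol) ∧
        DiscFibOn S.toES A.toES σ (posLE S.pol) (posLE A.pol) := by
  rw [isStrategy_iff_exists_orderIso hS hA hσ]
  refine ⟨fun ⟨φ, hφ⟩ => ?_, fun hfib => ?_⟩
  · have hfib := comparable_fibration_of_orderIso hσ hS φ hφ
    exact ⟨hfib.neg_of_comparable hσ, hfib.pos_of_comparable hσ⟩
  · obtain ⟨hcourt, hrec⟩ := (hσ.neg_and_pos_iff_courteous_and_receptive hA hS).1 hfib
    exact exists_orderIso_of_courteous_of_receptive hσ hS hcourt hrec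
      ((DiscFibOn.scott_iff_neg_and_pos hσ).2 hfib)

end Strategy

/-- main theorem: for a pre-strategy `σ : S → A`, the
following are equivalent: (i) `σ` is a strategy; (ii) `σ` is a discrete
fibration for `⊇⁻` and for `⊆⁺`; (iii) `σ` is a discrete fibration for the
Scott orders; (iv) `σ` is courteous and receptive. -/
theorem strategy_characterisation
    (A S : ESP) (hA : A.toES.IsES) (hS : S.toES.IsES)
    (σ : S.Evt → A.Evt) (hσ : IsPreStrategy S A σ) :
    (IsStrategy S A σ ↔
      (DiscFibOn S.toES A.toES σ (negLE S.pol) (negLE A.pol) ∧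
       DiscFibOn S.toES A.toES σ (posLE S.pol) (posLE A.pol))) ∧
    (IsStrategy S A σ ↔
      DiscFibOn S.toES A.toES σ (scottLE S.pol) (scottLE A.pol)) ∧
    (IsStrategy S A σ ↔ (Courteous S A σ ∧ Receptive S A σ)) := by
  have strategy_iff_fibrations := isStrategy_iff_neg_and_pos hS hA hσ
  exact ⟨strategy_iff_fibrations,
    strategy_iff_fibrations.trans (DiscFibOn.scott_iff_neg_and_pos hσ).symm,
    strategy_iff_fibrations.trans (hσ.neg_and_pos_iff_courteous_and_receptive hA hS)⟩
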